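/- arXiv:2407.11903 — 2 statements merged into one kernel-verified Lean document; each statement's English description precedes it below -/
import Mathlib

section
/- (Liouville theorem for quasilinear equations with bounded gradient) Let H : ℝⁿ → ℝ be a smooth function with D²H(p) positive definite for every p ∈ ℝⁿ. Let u : ℝⁿ → ℝ be a smooth function with sup_{x ∈ ℝⁿ} |∇u(x)| < ∞ satisfying div(∇H(∇u))(x) = ∑_{i,j} ∂ᵢ∂ⱼH(∇u(x)) ∂ᵢ∂ⱼu(x) = 0 for every x ∈ ℝⁿ. Then u is affine, i.e. there exist b ∈ ℝⁿ and c ∈ ℝ with u(x) = ⟨b, x⟩ + c. -/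
open Real

/-- Second partial derivative matrix (Hessian) of `u` at `x`. -/
noncomputable def hessianMatrix {n : ℕ} (u : EuclideanSpace ℝ (Fin n) → ℝ)
    (x : EuclideanSpace ℝ (Fin n)) : Matrix (Fin n) (Fin n) ℝ :=
  Matrix.of fun i j =>
    fderiv ℝ (fun y => fderiv ℝ u y (EuclideanSpace.single j 1)) x (EuclideanSpace.single i 1)

/-!
Each directional derivative `∂ᵥu` solves the linearized equation `div (D²H(∇u) ∇∂ᵥu) = 0`. Because
`∇u` stays in a compact set, the coefficients `D²H(∇u)` are uniformly elliptic, so it suffices that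
a bounded entire weak solution `v` of such an equation is constant. Normalize `-1 < v < 1`; after
possibly replacing `v` by `-v`, it is nonpositive on at least half of the ball of radius `2`. The
positive function `1 + log 2 - log (1 - v)` is a subsolution whose energy is bounded by a constant
(test the equation for `v` with `η² (1 - v)⁻¹`); Poincaré's inequality bounds it in `L²`, and Moser
iteration bounds it pointwise, so `v ≤ 1 - δ` on the unit ball. Since `δ` depends only on the
dimension and the ellipticity constants, rescaling gives the same on balls of every radius: on none
of them does `v` come close to both its supremum and its infimum unless these coincide.
-/

open MeasureTheory Metric Set Filter Topology
open scoped ContDiff Gradient ENNReal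

/-! ### Gradients and cutoff functions -/

section Gradient

variable {E : Type*} [NormedAddCommGroup E] [InnerProductSpace ℝ E] [CompleteSpace E]
  {f g : E → ℝ} {f' g' x : E}

lemma norm_gradient (f : E → ℝ) (x : E) : ‖∇ f x‖ = ‖fderiv ℝ f x‖ :=
  (InnerProductSpace.toDual ℝ E).symm.norm_map _

lemma contDiff_gradient {n : WithTop ℕ∞} (hf : ContDiff ℝ (n + 1) f) : ContDiff ℝ n (∇ f) :=
  (InnerProductSpace.toDual ℝ E).symm.contDiff.comp (hf.fderiv_right le_rfl)

lemma continuous_gradient (hf : ContDiff ℝ 1 f) : Continuous (∇ f) :=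
  (contDiff_gradient (n := 0) (by simpa using hf)).continuous

lemma hasCompactSupport_gradient (hf : HasCompactSupport f) : HasCompactSupport (∇ f) :=
  (hf.fderiv ℝ).comp_left (map_zero (InnerProductSpace.toDual ℝ E).symm)

lemma hasGradientAt_gradient (hf : ContDiff ℝ 1 f) (x : E) : HasGradientAt f (∇ f x) x :=
  (hf.differentiable one_ne_zero x).hasGradientAt

lemma hasGradientAt_mul (hf : HasGradientAt f f' x) (hg : HasGradientAt g g' x) :
    HasGradientAt (fun y ↦ f y * g y) (f x • g' + g x • f') x :=
  hasGradientAt_iff_hasFDerivAt.2 <|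
    (hf.hasFDerivAt.fun_mul hg.hasFDerivAt).congr_fderiv (by simp)

lemma hasGradientAt_comp {Φ : ℝ → ℝ} {d : ℝ} (hΦ : HasDerivAt Φ d (f x))
    (hf : HasGradientAt f f' x) : HasGradientAt (fun y ↦ Φ (f y)) (d • f') x :=
  hasGradientAt_iff_hasFDerivAt.2 <|
    (hΦ.comp_hasFDerivAt x hf.hasFDerivAt).congr_fderiv (by simp)

lemma hasGradientAt_sq_mul (hf : HasGradientAt f f' x) (hg : HasGradientAt g g' x) :
    HasGradientAt (fun y ↦ f y ^ 2 * g y) (f x ^ 2 • g' + (2 * f x * g x) • f') x := by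
  have hsq : HasGradientAt (fun y ↦ f y ^ 2) ((2 * f x) • f') x :=
    hasGradientAt_comp (by simpa using hasDerivAt_pow 2 (f x)) hf
  convert hasGradientAt_mul hsq hg using 2
  module

lemma gradient_comp_smul (hf : ContDiff ℝ 1 f) (R : ℝ) (x : E) :
    ∇ (fun y ↦ f (R • y)) x = R • ∇ f (R • x) := by
  have hsmul : HasFDerivAt (fun y : E ↦ R • y) (R • ContinuousLinearMap.id ℝ E) x :=
    (hasFDerivAt_id x).const_smul R
  refine (hasGradientAt_iff_hasFDerivAt.2 ?_).gradient
  exact ((hasGradientAt_gradient hf (R • x)).hasFDerivAt.comp x hsmul).congr_fderiv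
    (by ext; simp)

end Gradient

section Cutoff

lemma hasCompactSupport_deriv_smoothTransition : HasCompactSupport (deriv smoothTransition) := by
  refine HasCompactSupport.intro (isCompact_Icc (a := 0) (b := 1)) fun t ht ↦ ?_
  rcases not_and_or.1 ht with ht | ht <;> rw [not_le] at ht
  · have hzero : smoothTransition =ᶠ[𝓝 t] fun _ ↦ 0 := by
      filter_upwards [gt_mem_nhds ht] with s hs using smoothTransition.zero_of_nonpos hs.le
    simp [hzero.deriv_eq]
  · have hone : smoothTransition =ᶠ[𝓝 t] fun _ ↦ 1 := by
      filter_upwards [lt_mem_nhds ht] with s hs using smoothTransition.one_of_one_le hs.le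
    simp [hone.deriv_eq]

lemma exists_abs_deriv_smoothTransition_le : ∃ K : ℝ, ∀ t, |deriv smoothTransition t| ≤ K :=
  hasCompactSupport_deriv_smoothTransition.exists_bound_of_continuous
    (smoothTransition.contDiff.continuous_deriv le_rfl)

variable {E : Type*} [NormedAddCommGroup E]

/-- `η` is a cutoff function for the concentric balls of radii `r < R` around `c`: it equals `1` on
the smaller one, vanishes off the larger one, and has slope at most `K / (R - r)`. -/
structure IsCutoff [NormedSpace ℝ E] (η : E → ℝ) (c : E) (r R K : ℝ) : Prop where
  contDiff : ContDiff ℝ 1 η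
  nonneg : ∀ x, 0 ≤ η x
  le_one : ∀ x, η x ≤ 1
  eq_one : ∀ x ∈ closedBall c r, η x = 1
  eq_zero : ∀ x ∉ closedBall c R, η x = 0
  norm_fderiv_le : ∀ x, ‖fderiv ℝ η x‖ ≤ K / (R - r)

namespace IsCutoff

variable [NormedSpace ℝ E] {η : E → ℝ} {c x : E} {r R K : ℝ}

lemma hasCompactSupport [ProperSpace E] (h : IsCutoff η c r R K) : HasCompactSupport η :=
  .intro (isCompact_closedBall c R) h.eq_zero

lemma fderiv_eq_zero (h : IsCutoff η c r R K) (hx : x ∉ closedBall c R) : fderiv ℝ η x = 0 := by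
  have hzero : η =ᶠ[𝓝 x] fun _ ↦ 0 := by
    filter_upwards [isClosed_closedBall.isOpen_compl.mem_nhds hx] with y hy using h.eq_zero y hy
  simp [hzero.fderiv_eq]

end IsCutoff

variable [InnerProductSpace ℝ E]

lemma norm_fderiv_smoothTransition_comp_sq_norm_le {K r R : ℝ} (hr : 0 < r) (hrR : r < R)
    (hK : ∀ t, |deriv smoothTransition t| ≤ K) (c : E) {x : E} (hx : x ∈ closedBall c R) :
    ‖fderiv ℝ (fun y ↦ smoothTransition ((R ^ 2 - ‖y - c‖ ^ 2) / (R ^ 2 - r ^ 2))) x‖ ≤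
      2 * K / (R - r) := by
  have hK₀ : 0 ≤ K := (abs_nonneg _).trans (hK 0)
  have hd : 0 < R - r := sub_pos.2 hrR
  have hs : 0 < R + r := by linarith
  have hgap : R ^ 2 - r ^ 2 = (R - r) * (R + r) := by ring
  have hquot : HasFDerivAt (fun y ↦ (R ^ 2 - ‖y - c‖ ^ 2) / (R ^ 2 - r ^ 2))
      ((R ^ 2 - r ^ 2)⁻¹ • (-(2 • innerSL ℝ (x - c)) : E →L[ℝ] ℝ)) x := by
    have hsub : HasFDerivAt (fun y ↦ ‖y - c‖ ^ 2) (2 • innerSL ℝ (x - c)) x := by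
      simpa using ((hasFDerivAt_id x).sub_const c).norm_sq
    simpa [div_eq_inv_mul] using (hsub.const_sub (R ^ 2)).const_mul (R ^ 2 - r ^ 2)⁻¹
  have hsmooth := ((smoothTransition.contDiff (n := 1)).differentiable one_ne_zero
    ((R ^ 2 - ‖x - c‖ ^ 2) / (R ^ 2 - r ^ 2))).hasDerivAt
  have hinner : ‖2 • innerSL ℝ (x - c)‖ ≤ 2 * R := by
    rw [mem_closedBall_iff_norm] at hx
    refine norm_nsmul_le.trans ?_
    rw [innerSL_apply_norm]
    gcongr
    norm_num
  have hratio : (R + r)⁻¹ * R ≤ 1 := by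
    rw [inv_mul_le_iff₀ hs]
    linarith
  rw [← Function.comp_def, (hsmooth.comp_hasFDerivAt x hquot).fderiv, norm_smul, norm_smul,
    norm_neg, norm_inv, hgap, norm_of_nonneg (mul_pos hd hs).le]
  calc _ ≤ K * (((R - r) * (R + r))⁻¹ * (2 * R)) := by
        gcongr
        exact hK _
    _ = 2 * K / (R - r) * ((R + r)⁻¹ * R) := by field_simp
    _ ≤ 2 * K / (R - r) := mul_le_of_le_one_right (by positivity) hratio

variable (E) in
lemma exists_isCutoff : ∃ K : ℝ, ∀ (c : E) (r R : ℝ), 0 < r → r < R →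
    ∃ η : E → ℝ, IsCutoff η c r R K := by
  obtain ⟨K, hK⟩ := exists_abs_deriv_smoothTransition_le
  have hK₀ : 0 ≤ K := (abs_nonneg _).trans (hK 0)
  refine ⟨2 * K, fun c r R hr hrR ↦ ?_⟩
  have hd : 0 < R ^ 2 - r ^ 2 := by nlinarith
  set η : E → ℝ := fun y ↦ smoothTransition ((R ^ 2 - ‖y - c‖ ^ 2) / (R ^ 2 - r ^ 2))
  have hη : ContDiff ℝ 1 η := smoothTransition.contDiff.comp
    ((contDiff_const.sub ((contDiff_id.sub contDiff_const).norm_sq ℝ)).div_const _)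
  have hone : ∀ x ∈ closedBall c r, η x = 1 := fun x hx ↦ by
    refine smoothTransition.one_of_one_le ((one_le_div hd).2 ?_)
    rw [mem_closedBall_iff_norm] at hx
    gcongr
  have hzero : ∀ x ∉ closedBall c R, η x = 0 := fun x hx ↦ by
    refine smoothTransition.zero_of_nonpos (div_nonpos_of_nonpos_of_nonneg ?_ hd.le)
    rw [mem_closedBall_iff_norm, not_le] at hx
    nlinarith
  have hslope : ∀ x, ‖fderiv ℝ η x‖ ≤ 2 * K / (R - r) := fun x ↦ by
    by_cases hx : x ∈ closedBall c R
    · exact norm_fderiv_smoothTransition_comp_sq_norm_le hr hrR hK c hx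
    · have hlocal : η =ᶠ[𝓝 x] fun _ ↦ 0 := by
        filter_upwards [isClosed_closedBall.isOpen_compl.mem_nhds hx] with y hy using hzero y hy
      simpa [hlocal.fderiv_eq] using div_nonneg (by positivity) (sub_nonneg.2 hrR.le)
  exact ⟨η, hη, fun _ ↦ smoothTransition.nonneg _, fun _ ↦ smoothTransition.le_one _,
    hone, hzero, hslope⟩

end Cutoff

/-! ### Sobolev and Poincaré inequalities -/

section Sobolev

variable {E F : Type*} [NormedAddCommGroup E] [MeasurableSpace E] [BorelSpace E]
  [NormedAddCommGroup F]

lemma lintegral_enorm_rpow_eq_ofReal {μ : Measure E} [IsFiniteMeasureOnCompacts μ] {u : E → F}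
    (hu : Continuous u) (hs : HasCompactSupport u) {p : ℝ} (hp : 0 < p) :
    ∫⁻ x, ‖u x‖ₑ ^ p ∂μ = ENNReal.ofReal (∫ x, ‖u x‖ ^ p ∂μ) := by
  have hcont : Continuous fun x ↦ ‖u x‖ ^ p := hu.norm.rpow_const fun _ ↦ .inr hp.le
  have hsupp : HasCompactSupport fun x ↦ ‖u x‖ ^ p :=
    hs.comp_left (g := fun y ↦ ‖y‖ ^ p) (by simp [hp.ne'])
  rw [ofReal_integral_eq_lintegral_ofReal (hcont.integrable_of_hasCompactSupport hsupp)
    (.of_forall fun _ ↦ by positivity)]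
  simp only [← ENNReal.ofReal_rpow_of_nonneg (norm_nonneg _) hp.le, ofReal_norm]

lemma setLIntegral_enorm_sq_eq_ofReal {μ : Measure E} [IsFiniteMeasureOnCompacts μ] {u : E → F}
    (hu : Continuous u) {B : Set E} (hB : IsCompact B) :
    ∫⁻ x in B, ‖u x‖ₑ ^ 2 ∂μ = ENNReal.ofReal (∫ x in B, ‖u x‖ ^ 2 ∂μ) := by
  have hcont : Continuous fun x ↦ ‖u x‖ ^ 2 := by fun_prop
  rw [ofReal_integral_eq_lintegral_ofReal (hcont.continuousOn.integrableOn_compact hB)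
    (.of_forall fun _ ↦ sq_nonneg _)]
  simp only [ENNReal.ofReal_pow (norm_nonneg _), ofReal_norm]

lemma integral_norm_rpow_le_integral_norm_fderiv_rpow [NormedSpace ℝ E]
    [FiniteDimensional ℝ E] [NormedSpace ℝ F] (μ : Measure E)
    [μ.IsAddHaarMeasure] {p : ℝ} (hp : Real.HolderConjugate (Module.finrank ℝ E) p)
    {u : E → F} (hu : ContDiff ℝ 1 u) (hs : HasCompactSupport u) :
    ∫ x, ‖u x‖ ^ p ∂μ ≤
      lintegralPowLePowLIntegralFDerivConst μ p * (∫ x, ‖fderiv ℝ u x‖ ∂μ) ^ p := by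
  have hp₀ : 0 < p := hp.symm.pos
  have hgrad : ∫⁻ x, ‖fderiv ℝ u x‖ₑ ∂μ = ENNReal.ofReal (∫ x, ‖fderiv ℝ u x‖ ∂μ) := by
    simpa using lintegral_enorm_rpow_eq_ofReal (μ := μ) (hu.continuous_fderiv one_ne_zero)
      (hs.fderiv ℝ) one_pos
  have hnonneg : 0 ≤ ∫ x, ‖fderiv ℝ u x‖ ∂μ := integral_nonneg fun _ ↦ norm_nonneg _
  have hsob := lintegral_pow_le_pow_lintegral_fderiv μ hu hs hp
  rwa [lintegral_enorm_rpow_eq_ofReal hu.continuous hs hp₀, hgrad,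
    ENNReal.ofReal_rpow_of_nonneg hnonneg hp₀.le, ← ENNReal.ofReal_coe_nnreal,
    ← ENNReal.ofReal_mul (by positivity), ENNReal.ofReal_le_ofReal_iff (by positivity)] at hsob

end Sobolev

section Poincare

lemma sq_lintegral_le_lintegral_sq {α : Type*} [MeasurableSpace α] {μ : Measure α}
    [IsProbabilityMeasure μ] {f : α → ℝ≥0∞} (hf : AEMeasurable f μ) :
    (∫⁻ x, f x ∂μ) ^ 2 ≤ ∫⁻ x, f x ^ 2 ∂μ := by
  have hholder := ENNReal.lintegral_mul_le_Lp_mul_Lq μ Real.HolderConjugate.two_two hf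
    (aemeasurable_const (b := 1))
  simp only [Pi.mul_apply, lintegral_const, measure_univ, ENNReal.rpow_two,
    one_pow, ENNReal.one_rpow, mul_one] at hholder
  calc (∫⁻ x, f x ∂μ) ^ 2 ≤ ((∫⁻ x, f x ^ 2 ∂μ) ^ (1 / 2 : ℝ)) ^ 2 := by gcongr
    _ = ∫⁻ x, f x ^ 2 ∂μ := by rw [← ENNReal.rpow_mul_natCast]; simp

variable {E F : Type*} [NormedAddCommGroup E] [NormedSpace ℝ E] [NormedAddCommGroup F]
  [NormedSpace ℝ F]

lemma enorm_sub_sq_le_lintegral_segment {w : E → F} (hw : ContDiff ℝ 1 w) (x y : E) :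
    ‖w x - w y‖ₑ ^ 2 ≤
      ‖x - y‖ₑ ^ 2 * ∫⁻ t in Icc (0 : ℝ) 1, ‖fderiv ℝ w (y + t • (x - y))‖ₑ ^ 2 := by
  have hcont : Continuous fun t : ℝ ↦ fderiv ℝ w (y + t • (x - y)) :=
    (hw.continuous_fderiv one_ne_zero).comp (by fun_prop)
  have hderiv (t : ℝ) : HasDerivAt (fun t : ℝ ↦ w (y + t • (x - y)))
      (fderiv ℝ w (y + t • (x - y)) (x - y)) t :=
    ((hw.differentiable one_ne_zero _).hasFDerivAt).comp_hasDerivAt t <| by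
      simpa using ((hasDerivAt_id t).smul_const (x - y)).const_add y
  have hftc : ‖w x - w y‖ₑ ≤
      ∫⁻ t in Icc (0 : ℝ) 1, ‖fderiv ℝ w (y + t • (x - y)) (x - y)‖ₑ := by
    have hcurve : ContDiffOn ℝ 1 (fun t : ℝ ↦ w (y + t • (x - y))) (Icc 0 1) :=
      (hw.comp (by fun_prop)).contDiffOn
    simpa [(hderiv _).deriv] using
      enorm_sub_le_lintegral_deriv_of_contDiffOn_Icc hcurve zero_le_one
  have : IsProbabilityMeasure (volume.restrict (Icc (0 : ℝ) 1)) := ⟨by simp⟩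
  calc ‖w x - w y‖ₑ ^ 2
      ≤ (∫⁻ t in Icc (0 : ℝ) 1, ‖fderiv ℝ w (y + t • (x - y)) (x - y)‖ₑ) ^ 2 := by gcongr
    _ ≤ ∫⁻ t in Icc (0 : ℝ) 1, ‖fderiv ℝ w (y + t • (x - y)) (x - y)‖ₑ ^ 2 :=
        sq_lintegral_le_lintegral_sq (hcont.clm_apply continuous_const).enorm.aemeasurable
    _ ≤ ∫⁻ t in Icc (0 : ℝ) 1, ‖x - y‖ₑ ^ 2 * ‖fderiv ℝ w (y + t • (x - y))‖ₑ ^ 2 := by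
        gcongr with t
        rw [← mul_pow, mul_comm]
        gcongr
        exact ContinuousLinearMap.le_opENorm _ _
    _ = _ := lintegral_const_mul' _ _ (by finiteness)

lemma enorm_sq_le_lintegral_segment {w : E → F} (hw : ContDiff ℝ 1 w) {B : Set E}
    (hB : Convex ℝ B) {x y : E} (hx : x ∈ B) (hy : y ∈ B) {d W : ℝ≥0∞} (hd : ‖x - y‖ₑ ≤ d)
    (hW : ‖w y‖ₑ ≤ W) :
    ‖w x‖ₑ ^ 2 ≤ 2 * d ^ 2 * (∫⁻ t in Icc (0 : ℝ) 1,
      B.indicator (fun z ↦ ‖fderiv ℝ w z‖ₑ ^ 2) (y + t • (x - y))) + 2 * W ^ 2 := by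
  have hsplit : ‖w x‖ₑ ≤ ‖w x - w y‖ₑ + ‖w y‖ₑ := by simpa using enorm_add_le (w x - w y) (w y)
  have hseg : ∫⁻ t in Icc (0 : ℝ) 1, B.indicator (fun z ↦ ‖fderiv ℝ w z‖ₑ ^ 2) (y + t • (x - y)) =
      ∫⁻ t in Icc (0 : ℝ) 1, ‖fderiv ℝ w (y + t • (x - y))‖ₑ ^ 2 :=
    setLIntegral_congr_fun measurableSet_Icc fun t ht ↦
      indicator_of_mem (hB.add_smul_sub_mem hy hx ht) _
  rw [hseg]
  calc ‖w x‖ₑ ^ 2 ≤ (‖w x - w y‖ₑ + ‖w y‖ₑ) ^ 2 := by gcongr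
    _ ≤ 2 * (‖w x - w y‖ₑ ^ 2 + ‖w y‖ₑ ^ 2) := by
        simpa [show (2 - 1 : ℝ) = 1 by norm_num] using
          ENNReal.rpow_add_le_mul_rpow_add_rpow ‖w x - w y‖ₑ ‖w y‖ₑ one_le_two
    _ ≤ 2 * (d ^ 2 * (∫⁻ t in Icc (0 : ℝ) 1, ‖fderiv ℝ w (y + t • (x - y))‖ₑ ^ 2) + W ^ 2) := by
        grw [enorm_sub_sq_le_lintegral_segment hw x y, hd, hW]
    _ = _ := by ring

variable [FiniteDimensional ℝ E] [MeasurableSpace E] [BorelSpace E] {μ : Measure E}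
  [μ.IsAddHaarMeasure]

lemma lintegral_comp_add_smul_le {G : E → ℝ≥0∞} (hG : Measurable G) {t : ℝ} (ht : 1 / 2 ≤ t)
    (a : E) : ∫⁻ x, G (a + t • x) ∂μ ≤ 2 ^ Module.finrank ℝ E * ∫⁻ x, G x ∂μ := by
  have ht₀ : 0 < t := by linarith
  rw [← lintegral_map (f := fun x ↦ G (a + x)) (by fun_prop) (measurable_const_smul t),
    Measure.map_addHaar_smul μ ht₀.ne', lintegral_smul_measure, lintegral_add_left_eq_self G a,
    smul_eq_mul]
  gcongr
  rw [abs_of_pos (by positivity), ← inv_pow, ENNReal.ofReal_pow (by positivity)]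
  gcongr
  rw [← ENNReal.ofReal_ofNat]
  gcongr
  rw [inv_le_comm₀ ht₀ two_pos]
  linarith

-- One of the weights `t`, `1 - t` is at least `1 / 2`; integrate first in that variable.
lemma lintegral_lintegral_segment_le {G : E → ℝ≥0∞} (hG : Measurable G) (B : Set E) (t : ℝ) :
    ∫⁻ x in B, ∫⁻ y in B, G (y + t • (x - y)) ∂μ ∂μ ≤
      2 ^ Module.finrank ℝ E * (∫⁻ x, G x ∂μ) * μ B := by
  have hslice (s : ℝ) (a : E) (hs : 1 / 2 ≤ s) :
      ∫⁻ x in B, G (a + s • x) ∂μ ≤ 2 ^ Module.finrank ℝ E * ∫⁻ x, G x ∂μ :=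
    (setLIntegral_le_lintegral _ _).trans (lintegral_comp_add_smul_le hG hs a)
  rcases le_total (1 / 2) t with ht | ht
  · rw [lintegral_lintegral_swap (by fun_prop), ← setLIntegral_const]
    refine lintegral_mono fun y ↦ le_of_eq_of_le (lintegral_congr fun x ↦ ?_)
      (hslice t ((1 - t) • y) ht)
    congr 1
    module
  · rw [← setLIntegral_const]
    refine lintegral_mono fun x ↦ le_of_eq_of_le (lintegral_congr fun y ↦ ?_)
      (hslice (1 - t) (t • x) (by linarith))
    congr 1
    module

lemma lintegral_lintegral_lintegral_segment_le {G : E → ℝ≥0∞} (hG : Measurable G) (B : Set E) :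
    ∫⁻ x in B, ∫⁻ y in B, (∫⁻ t in Icc (0 : ℝ) 1, G (y + t • (x - y))) ∂μ ∂μ ≤
      2 ^ Module.finrank ℝ E * (∫⁻ x, G x ∂μ) * μ B :=
  calc
    _ = ∫⁻ x in B, (∫⁻ t in Icc (0 : ℝ) 1, ∫⁻ y in B, G (y + t • (x - y)) ∂μ) ∂μ :=
        lintegral_congr fun x ↦ lintegral_lintegral_swap (by fun_prop)
    _ = ∫⁻ t in Icc (0 : ℝ) 1, ∫⁻ x in B, ∫⁻ y in B, G (y + t • (x - y)) ∂μ ∂μ :=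
        lintegral_lintegral_swap (Measurable.lintegral_prod_right'
          (f := fun q : (E × ℝ) × E ↦ G (q.2 + q.1.2 • (q.1.1 - q.2))) (by fun_prop)).aemeasurable
    _ ≤ ∫⁻ _ in Icc (0 : ℝ) 1, 2 ^ Module.finrank ℝ E * (∫⁻ x, G x ∂μ) * μ B :=
        lintegral_mono fun t ↦ lintegral_lintegral_segment_le hG B t
    _ = _ := by simp

lemma lintegral_enorm_sq_mul_measure_le {w : E → F} (hw : ContDiff ℝ 1 w) {B N : Set E}
    (hB : MeasurableSet B) (hBconv : Convex ℝ B) (hN : MeasurableSet N) (hNB : N ⊆ B)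
    {d W : ℝ≥0∞} (hd : ∀ x ∈ B, ∀ y ∈ B, ‖x - y‖ₑ ≤ d) (hW : ∀ y ∈ N, ‖w y‖ₑ ≤ W) :
    (∫⁻ x in B, ‖w x‖ₑ ^ 2 ∂μ) * μ N ≤
      2 * d ^ 2 * (2 ^ Module.finrank ℝ E * (∫⁻ x in B, ‖fderiv ℝ w x‖ₑ ^ 2 ∂μ) * μ B) +
        2 * W ^ 2 * μ N * μ B := by
  have hwd := hw.continuous_fderiv one_ne_zero
  set G : E → ℝ≥0∞ := B.indicator fun z ↦ ‖fderiv ℝ w z‖ₑ ^ 2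
  have hGm : Measurable G := (hwd.enorm.measurable.pow_const 2).indicator hB
  have hGint : ∫⁻ x, G x ∂μ = ∫⁻ x in B, ‖fderiv ℝ w x‖ₑ ^ 2 ∂μ := lintegral_indicator hB _
  have hinner : Measurable fun q : E × E ↦ ∫⁻ t in Icc (0 : ℝ) 1, G (q.2 + t • (q.1 - q.2)) :=
    Measurable.lintegral_prod_right' (f := fun q : (E × E) × ℝ ↦ G (q.1.2 + q.2 • (q.1.1 - q.1.2)))
      (by fun_prop)
  calc (∫⁻ x in B, ‖w x‖ₑ ^ 2 ∂μ) * μ N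
      = ∫⁻ x in B, ∫⁻ _ in N, ‖w x‖ₑ ^ 2 ∂μ ∂μ := by
        simp only [setLIntegral_const]
        rw [lintegral_mul_const _ (hw.continuous.enorm.measurable.pow_const 2)]
    _ ≤ ∫⁻ x in B, ∫⁻ y in N,
          (2 * d ^ 2 * (∫⁻ t in Icc (0 : ℝ) 1, G (y + t • (x - y))) + 2 * W ^ 2) ∂μ ∂μ :=
        setLIntegral_mono' hB fun x hx ↦ setLIntegral_mono' hN fun y hy ↦
          enorm_sq_le_lintegral_segment hw hBconv hx (hNB hy) (hd x hx y (hNB hy)) (hW y hy)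
    _ = 2 * d ^ 2 * (∫⁻ x in B, ∫⁻ y in N, (∫⁻ t in Icc (0 : ℝ) 1, G (y + t • (x - y))) ∂μ ∂μ) +
          2 * W ^ 2 * μ N * μ B := by
        simp_rw [lintegral_add_right _ measurable_const, setLIntegral_const]
        rw [← lintegral_const_mul _ hinner.lintegral_prod_right']
        congr 2 with x
        exact lintegral_const_mul _ (hinner.comp measurable_prodMk_left)
    _ ≤ _ := by
        gcongr
        calc _ ≤ ∫⁻ x in B, ∫⁻ y in B, (∫⁻ t in Icc (0 : ℝ) 1, G (y + t • (x - y))) ∂μ ∂μ := by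
              gcongr
          _ ≤ _ := hGint ▸ lintegral_lintegral_lintegral_segment_le hGm B

lemma setIntegral_norm_sq_mul_measureReal_le {w : E → F} (hw : ContDiff ℝ 1 w) {B N : Set E}
    (hB : IsCompact B) (hBconv : Convex ℝ B) (hN : MeasurableSet N) (hNB : N ⊆ B) {d W : ℝ}
    (hd₀ : 0 ≤ d) (hW₀ : 0 ≤ W) (hd : ∀ x ∈ B, ∀ y ∈ B, ‖x - y‖ ≤ d)
    (hW : ∀ y ∈ N, ‖w y‖ ≤ W) :
    (∫ x in B, ‖w x‖ ^ 2 ∂μ) * μ.real N ≤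
      2 * d ^ 2 * (2 ^ Module.finrank ℝ E * (∫ x in B, ‖fderiv ℝ w x‖ ^ 2 ∂μ) * μ.real B) +
        2 * W ^ 2 * μ.real N * μ.real B := by
  have hBfin : μ B ≠ ⊤ := hB.measure_ne_top
  have hNfin : μ N ≠ ⊤ := ne_top_of_le_ne_top hBfin (measure_mono hNB)
  have hmain := lintegral_enorm_sq_mul_measure_le (μ := μ) hw hB.measurableSet hBconv hN hNB
    (fun x hx y hy ↦ (ofReal_norm _).symm.trans_le (ENNReal.ofReal_le_ofReal <| hd x hx y hy))
    (fun y hy ↦ (ofReal_norm _).symm.trans_le (ENNReal.ofReal_le_ofReal <| hW y hy))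
  rw [setLIntegral_enorm_sq_eq_ofReal hw.continuous hB,
    setLIntegral_enorm_sq_eq_ofReal (hw.continuous_fderiv one_ne_zero) hB] at hmain
  have hreal := ENNReal.toReal_mono (by finiteness) hmain
  have hsq_nonneg (f : E → ℝ) : 0 ≤ ∫ x in B, f x ^ 2 ∂μ := integral_nonneg fun _ ↦ sq_nonneg _
  rw [ENNReal.toReal_add (by finiteness) (by finiteness)] at hreal
  simpa only [ENNReal.toReal_mul, ENNReal.toReal_pow, ENNReal.toReal_ofReal hd₀,
    ENNReal.toReal_ofReal hW₀, ENNReal.toReal_ofReal (hsq_nonneg _), ENNReal.toReal_ofNat,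
    measureReal_def] using hreal

lemma setIntegral_norm_sq_le_of_half_measure {w : E → F} (hw : ContDiff ℝ 1 w) {B N : Set E}
    (hB : IsCompact B) (hBconv : Convex ℝ B) (hN : MeasurableSet N) (hNB : N ⊆ B) {d W : ℝ}
    (hd : ∀ x ∈ B, ∀ y ∈ B, ‖x - y‖ ≤ d) (hW : ∀ y ∈ N, ‖w y‖ ≤ W)
    (hhalf : μ.real B ≤ 2 * μ.real N) :
    ∫ x in B, ‖w x‖ ^ 2 ∂μ ≤
      4 * d ^ 2 * 2 ^ Module.finrank ℝ E * (∫ x in B, ‖fderiv ℝ w x‖ ^ 2 ∂μ) +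
        2 * W ^ 2 * μ.real B := by
  rcases measureReal_nonneg (μ := μ) (s := N) |>.eq_or_lt with hnull | hpos
  · have hBnull : μ.real B = 0 := by linarith [measureReal_nonneg (μ := μ) (s := B)]
    simp [Measure.restrict_eq_zero.2 ((measureReal_eq_zero_iff hB.measure_ne_top).1 hBnull), hBnull]
  obtain ⟨y, hy⟩ : N.Nonempty := nonempty_of_measureReal_ne_zero hpos.ne'
  have hd₀ : 0 ≤ d := (norm_nonneg _).trans (hd y (hNB hy) y (hNB hy))
  have hW₀ : 0 ≤ W := (norm_nonneg _).trans (hW y hy)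
  refine le_of_mul_le_mul_right ?_ hpos
  calc _ ≤ _ := setIntegral_norm_sq_mul_measureReal_le hw hB hBconv hN hNB hd₀ hW₀ hd hW
    _ ≤ 2 * d ^ 2 * (2 ^ Module.finrank ℝ E * (∫ x in B, ‖fderiv ℝ w x‖ ^ 2 ∂μ) *
          (2 * μ.real N)) + 2 * W ^ 2 * μ.real N * μ.real B := by gcongr
    _ = _ := by ring

end Poincare

/-! ### The arithmetic of Moser iteration -/

section MoserIteration

lemma rpow_inv_sub_one_rpow {x p : ℝ} (hx : 0 < x) (hp : 1 < p) :
    (x ^ (p - 1)⁻¹) ^ p = x ^ (p - 1)⁻¹ * x := by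
  have hp' : p - 1 ≠ 0 := (sub_pos.2 hp).ne'
  rw [← rpow_mul hx.le, ← rpow_add_one hx.ne']
  congr 1
  field_simp
  ring

-- With `B ^ p = B * b ^ p` and `A ^ p = A * (B * C ^ p)`, the quantity `A * B ^ k * I k` satisfies
-- the recursion without constants.
lemma exists_forall_le_rpow_of_le_rpow {p b C : ℝ} (hp : 1 < p) (hb : 1 ≤ b) (hC : 1 ≤ C) :
    ∃ A : ℝ, 0 < A ∧ ∀ I : ℕ → ℝ, (∀ k, 0 ≤ I k) →
      (∀ k, I (k + 1) ≤ (C * b ^ k * I k) ^ p) → ∀ k, I k ≤ (A * I 0) ^ p ^ k := by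
  have hp₀ : 0 < p := by linarith
  have hinv : 0 ≤ (p - 1)⁻¹ := inv_nonneg.2 (by linarith)
  set B : ℝ := (b ^ p) ^ (p - 1)⁻¹
  have hB : 1 ≤ B := one_le_rpow (one_le_rpow hb hp₀.le) hinv
  set A : ℝ := (B * C ^ p) ^ (p - 1)⁻¹
  have hA : 1 ≤ A := one_le_rpow (one_le_mul_of_one_le_of_one_le hB (one_le_rpow hC hp₀.le)) hinv
  have hBp : B ^ p = B * b ^ p := rpow_inv_sub_one_rpow (by positivity) hp
  have hAp : A ^ p = A * (B * C ^ p) := rpow_inv_sub_one_rpow (by positivity) hp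
  refine ⟨A, by positivity, fun I hI hstep k ↦ ?_⟩
  have hrescaled : A * B ^ k * I k ≤ (A * I 0) ^ p ^ k := by
    induction k with
    | zero => simp
    | succ k ih =>
      have hIk := hI k
      calc A * B ^ (k + 1) * I (k + 1)
          ≤ A * B ^ (k + 1) * (C * b ^ k * I k) ^ p := by gcongr; exact hstep k
        _ = (A * B ^ k * I k) ^ p := by
            rw [mul_rpow (by positivity) hIk, mul_rpow (by positivity) (by positivity),
              mul_rpow (x := A * B ^ k) (by positivity) hIk, mul_rpow (by positivity)
              (by positivity), hAp, ← rpow_pow_comm (by positivity),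
              ← rpow_pow_comm (by positivity), hBp]
            ring
        _ ≤ ((A * I 0) ^ p ^ k) ^ p := by gcongr
        _ = (A * I 0) ^ p ^ (k + 1) := by
            rw [← rpow_mul (mul_nonneg (by positivity) (hI 0)), pow_succ]
  calc I k ≤ A * B ^ k * I k :=
        le_mul_of_one_le_left (hI k) (one_le_mul_of_one_le_of_one_le hA (one_le_pow₀ hB))
    _ ≤ _ := hrescaled

lemma le_of_forall_setIntegral_rpow_le {X : Type*} [TopologicalSpace X] [MeasurableSpace X]
    [OpensMeasurableSpace X] {μ : Measure X} [μ.IsOpenPosMeasure] {g : X → ℝ} (hg : Continuous g)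
    (hg₀ : ∀ x, 0 ≤ g x) {U : Set X} (hU : IsOpen U) (hUfin : μ U ≠ ⊤) {q : ℕ → ℝ}
    (hq : Tendsto q atTop atTop) (hint : ∀ k, IntegrableOn (fun x ↦ g x ^ q k) U μ) {Z : ℝ}
    (hZ : 0 ≤ Z) (hle : ∀ k, ∫ x in U, g x ^ q k ∂μ ≤ Z ^ q k) {x : X} (hx : x ∈ U) :
    g x ≤ Z := by
  by_contra! hlt
  obtain ⟨c, hZc, hcx⟩ := exists_between hlt
  have hc : 0 < c := hZ.trans_lt hZc
  set V := U ∩ {y | c < g y}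
  have hV : IsOpen V := hU.inter (isOpen_lt continuous_const hg)
  have hVfin : μ V ≠ ⊤ := ne_top_of_le_ne_top hUfin (measure_mono inter_subset_left)
  have hVpos : 0 < μ.real V := ENNReal.toReal_pos (hV.measure_ne_zero μ ⟨x, hx, hcx⟩) hVfin
  have hbound : ∀ᶠ k in atTop, μ.real V ≤ (Z / c) ^ q k := by
    filter_upwards [hq.eventually_ge_atTop 0] with k hk
    rw [div_rpow hZ hc.le, le_div_iff₀ (by positivity), mul_comm]
    calc c ^ q k * μ.real V ≤ ∫ y in V, g y ^ q k ∂μ :=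
          setIntegral_ge_of_const_le_real hV.measurableSet hVfin
            (fun y hy ↦ rpow_le_rpow hc.le hy.2.le hk) ((hint k).mono_set inter_subset_left)
      _ ≤ ∫ y in U, g y ^ q k ∂μ :=
          setIntegral_mono_set (hint k) (.of_forall fun y ↦ rpow_nonneg (hg₀ y) _)
            inter_subset_left.eventuallyLE
      _ ≤ Z ^ q k := hle k
  have hlim : Tendsto (fun k ↦ (Z / c) ^ q k) atTop (𝓝 0) :=
    (tendsto_rpow_atTop_of_base_lt_one _ (by linarith [div_nonneg hZ hc.le])
      ((div_lt_one hc).2 hZc)).comp hq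
  exact hVpos.not_ge (ge_of_tendsto hlim hbound)

end MoserIteration

/-! ### Weak solutions of uniformly elliptic equations -/

lemma integrable_norm_sq {X F : Type*} [TopologicalSpace X] [MeasurableSpace X]
    [OpensMeasurableSpace X] {μ : Measure X} [IsFiniteMeasureOnCompacts μ] [NormedAddCommGroup F]
    {f : X → F} (hf : Continuous f) (hfs : HasCompactSupport f) :
    Integrable (fun x ↦ ‖f x‖ ^ 2) μ :=
  (hf.norm.pow 2).integrable_of_hasCompactSupport <|
    .intro' hfs (isClosed_tsupport f) fun x hx ↦ by simp [image_eq_zero_of_notMem_tsupport hx]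

/-- Uniform ellipticity, with constants `l` and `L`, of the continuous coefficient field `a` of
the operator `v ↦ div (a ∇v)`; the coefficients act on gradients as bilinear forms, which need not
be symmetric. -/
structure IsUniformlyElliptic {E : Type*} [NormedAddCommGroup E] [NormedSpace ℝ E]
    (a : E → E →L[ℝ] E →L[ℝ] ℝ) (l L : ℝ) : Prop where
  pos : 0 < l
  continuous : Continuous a
  le_apply_self : ∀ x ξ, l * ‖ξ‖ ^ 2 ≤ a x ξ ξ
  norm_le : ∀ x, ‖a x‖ ≤ L

namespace IsUniformlyElliptic

variable {E : Type*} [NormedAddCommGroup E] [NormedSpace ℝ E] {a : E → E →L[ℝ] E →L[ℝ] ℝ}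
  {l L : ℝ} {ξ ζ : E → E}

lemma nonneg (ha : IsUniformlyElliptic a l L) (x ξ : E) : 0 ≤ a x ξ ξ :=
  (mul_nonneg ha.pos.le (sq_nonneg _)).trans (ha.le_apply_self x ξ)

lemma comp_continuous (ha : IsUniformlyElliptic a l L) {g : E → E} (hg : Continuous g) :
    IsUniformlyElliptic (fun x ↦ a (g x)) l L where
  pos := ha.pos
  continuous := ha.continuous.comp hg
  le_apply_self x := ha.le_apply_self (g x)
  norm_le x := ha.norm_le (g x)

lemma continuous_apply (ha : IsUniformlyElliptic a l L) (hξ : Continuous ξ) (hζ : Continuous ζ) :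
    Continuous fun x ↦ a x (ξ x) (ζ x) :=
  (ha.continuous.clm_apply hξ).clm_apply hζ

lemma integrable_apply [MeasurableSpace E] [OpensMeasurableSpace E]
    {μ : Measure E} [IsFiniteMeasureOnCompacts μ] (ha : IsUniformlyElliptic a l L)
    (hξ : Continuous ξ) (hζ : Continuous ζ) (hζs : HasCompactSupport ζ) :
    Integrable (fun x ↦ a x (ξ x) (ζ x)) μ :=
  (ha.continuous_apply hξ hζ).integrable_of_hasCompactSupport <|
    .intro hζs fun x hx ↦ by simp [image_eq_zero_of_notMem_tsupport hx]

lemma sub_le_apply_add_two_smul (ha : IsUniformlyElliptic a l L) (x ξ ζ : E) :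
    l / 2 * ‖ξ‖ ^ 2 - 2 * L ^ 2 / l * ‖ζ‖ ^ 2 ≤ a x ξ (ξ + (2 : ℝ) • ζ) := by
  have hl := ha.pos
  have hcross : -(L * ‖ξ‖ * ‖ζ‖) ≤ a x ξ ζ := by
    refine neg_le_of_abs_le (((a x).le_opNorm₂ ξ ζ).trans ?_)
    gcongr
    exact ha.norm_le x
  have hyoung : 2 * (L * ‖ξ‖ * ‖ζ‖) ≤ l / 2 * ‖ξ‖ ^ 2 + 2 * L ^ 2 / l * ‖ζ‖ ^ 2 := by
    have hsq : l / 2 * ‖ξ‖ ^ 2 + 2 * L ^ 2 / l * ‖ζ‖ ^ 2 - 2 * (L * ‖ξ‖ * ‖ζ‖)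
        = (l * ‖ξ‖ - 2 * L * ‖ζ‖) ^ 2 / (2 * l) := by
      field_simp
      ring
    rw [← sub_nonneg, hsq]
    positivity
  simp only [map_add, map_smul, smul_eq_mul]
  linarith [ha.le_apply_self x ξ]

lemma integral_norm_sq_le [MeasurableSpace E] [OpensMeasurableSpace E]
    {μ : Measure E} [IsFiniteMeasureOnCompacts μ] (ha : IsUniformlyElliptic a l L)
    (hξ : Continuous ξ) (hξs : HasCompactSupport ξ) (hζ : Continuous ζ)
    (hζs : HasCompactSupport ζ) (h : ∫ x, a x (ξ x) (ξ x + (2 : ℝ) • ζ x) ∂μ ≤ 0) :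
    ∫ x, ‖ξ x‖ ^ 2 ∂μ ≤ (2 * L / l) ^ 2 * ∫ x, ‖ζ x‖ ^ 2 ∂μ := by
  have hξ₂ := integrable_norm_sq (μ := μ) hξ hξs
  have hζ₂ := integrable_norm_sq (μ := μ) hζ hζs
  have hform : Integrable (fun x ↦ a x (ξ x) (ξ x + (2 : ℝ) • ζ x)) μ :=
    ha.integrable_apply hξ (hξ.add (hζ.const_smul 2)) (hξs.add (hζs.smul_left (f := fun _ ↦ 2)))
  have hle := integral_mono ((hξ₂.const_mul (l / 2)).sub (hζ₂.const_mul (2 * L ^ 2 / l))) hform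
    fun x ↦ ha.sub_le_apply_add_two_smul x (ξ x) (ζ x)
  simp only [Pi.sub_apply] at hle
  rw [integral_sub (hξ₂.const_mul _) (hζ₂.const_mul _), integral_const_mul,
    integral_const_mul] at hle
  have hl := ha.pos
  have hsplit : (2 * L / l) ^ 2 * ∫ x, ‖ζ x‖ ^ 2 ∂μ
      = 2 / l * (2 * L ^ 2 / l * ∫ x, ‖ζ x‖ ^ 2 ∂μ) := by
    field_simp
  rw [hsplit, ← div_le_iff₀' (by positivity)]
  calc (∫ x, ‖ξ x‖ ^ 2 ∂μ) / (2 / l) = l / 2 * ∫ x, ‖ξ x‖ ^ 2 ∂μ := by field_simp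
    _ ≤ _ := by linarith

end IsUniformlyElliptic

section WeakSolution

variable {E : Type*} [NormedAddCommGroup E] [InnerProductSpace ℝ E] [FiniteDimensional ℝ E]
  [MeasurableSpace E] [BorelSpace E]

/-- `v` is a `C¹` weak solution of `div (a ∇v) = 0` on the whole space. -/
structure IsWeakSolution (a : E → E →L[ℝ] E →L[ℝ] ℝ) (v : E → ℝ) : Prop where
  contDiff : ContDiff ℝ 1 v
  integral_eq_zero : ∀ φ : E → ℝ, ContDiff ℝ 1 φ → HasCompactSupport φ →
    ∫ x, a x (∇ v x) (∇ φ x) = 0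

/-- `v` is a `C¹` weak subsolution, `div (a ∇v) ≥ 0`, on the whole space. -/
structure IsWeakSubsolution (a : E → E →L[ℝ] E →L[ℝ] ℝ) (v : E → ℝ) : Prop where
  contDiff : ContDiff ℝ 1 v
  integral_le_zero : ∀ φ : E → ℝ, ContDiff ℝ 1 φ → HasCompactSupport φ → (∀ x, 0 ≤ φ x) →
    ∫ x, a x (∇ v x) (∇ φ x) ≤ 0

variable {a : E → E →L[ℝ] E →L[ℝ] ℝ} {v η : E → ℝ} {l L : ℝ}

namespace IsWeakSolution

lemma isWeakSubsolution (hv : IsWeakSolution a v) : IsWeakSubsolution a v where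
  contDiff := hv.contDiff
  integral_le_zero φ hφ hφs _ := (hv.integral_eq_zero φ hφ hφs).le

lemma const_mul_add_const (hv : IsWeakSolution a v) (α β : ℝ) :
    IsWeakSolution a fun x ↦ α * v x + β where
  contDiff := (contDiff_const.mul hv.contDiff).add contDiff_const
  integral_eq_zero φ hφ hφs := by
    have hgrad (x : E) : ∇ (fun y ↦ α * v y + β) x = α • ∇ v x :=
      (hasGradientAt_comp (Φ := fun t ↦ α * t + β)
        (by simpa using ((hasDerivAt_id (v x)).const_mul α).add_const β)
        (hasGradientAt_gradient hv.contDiff x)).gradient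
    simp only [hgrad, map_smul, smul_apply, integral_smul,
      hv.integral_eq_zero φ hφ hφs, smul_zero]

lemma comp_smul (hv : IsWeakSolution a v) {R : ℝ} (hR : R ≠ 0) :
    IsWeakSolution (fun x ↦ a (R • x)) fun x ↦ v (R • x) where
  contDiff := hv.contDiff.comp (contDiff_const_smul R)
  integral_eq_zero φ hφ hφs := by
    let ψ : E → ℝ := fun y ↦ φ (R⁻¹ • y)
    have hψ : ContDiff ℝ 1 ψ := hφ.comp (contDiff_const_smul R⁻¹)
    have hφψ : φ = fun x ↦ ψ (R • x) := by simp [ψ, hR]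
    have hform (x : E) : a (R • x) (∇ (fun y ↦ v (R • y)) x) (∇ φ x)
        = R ^ 2 * a (R • x) (∇ v (R • x)) (∇ ψ (R • x)) := by
      rw [hφψ, gradient_comp_smul hv.contDiff, gradient_comp_smul hψ]
      simp only [map_smul, smul_apply, smul_eq_mul]
      ring
    have hψs : HasCompactSupport ψ := hφs.comp_smul (inv_ne_zero hR)
    simp_rw [hform]
    rw [integral_const_mul, Measure.integral_comp_smul volume fun y ↦ a y (∇ v y) (∇ ψ y),
      hv.integral_eq_zero ψ hψ hψs, smul_zero, mul_zero]

end IsWeakSolution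

end WeakSolution

/-! ### The local maximum principle -/

lemma deriv_nonneg_of_monotoneOn {Φ : ℝ → ℝ} {s : Set ℝ} (hs : IsOpen s) (hΦ : MonotoneOn Φ s)
    {t : ℝ} (ht : t ∈ s) : 0 ≤ deriv Φ t := by
  rw [← derivWithin_of_isOpen hs ht]
  exact hΦ.derivWithin_nonneg

lemma integral_le_mul_setIntegral {X : Type*} [TopologicalSpace X] [MeasurableSpace X]
    [OpensMeasurableSpace X] {μ : Measure X} [IsFiniteMeasureOnCompacts μ] {f g : X → ℝ}
    (hf : Continuous f) (hg : Continuous g) {B : Set X} (hB : IsCompact B) (hBm : MeasurableSet B)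
    {k : ℝ} (hle : ∀ x ∈ B, f x ≤ k * g x) (hzero : ∀ x ∉ B, f x = 0) :
    ∫ x, f x ∂μ ≤ k * ∫ x in B, g x ∂μ := by
  rw [← setIntegral_eq_integral_of_forall_compl_eq_zero hzero, ← integral_const_mul]
  exact setIntegral_mono_on (hf.continuousOn.integrableOn_compact' hB hBm)
    ((hg.const_mul k).continuousOn.integrableOn_compact' hB hBm) hBm hle

lemma norm_gradient_sq_mul_le {E : Type*} [NormedAddCommGroup E] [InnerProductSpace ℝ E]
    [CompleteSpace E] {η w : E → ℝ} (hη : ContDiff ℝ 1 η) (hw : ContDiff ℝ 1 w) (x : E) :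
    ‖∇ (fun y ↦ (η y * w y) ^ 2) x‖
      ≤ 2 * (η x * w x) ^ 2 + (‖η x • ∇ w x‖ ^ 2 + ‖w x • ∇ η x‖ ^ 2) := by
  have hgrad : ∇ (fun y ↦ (η y * w y) ^ 2) x
      = (2 * (η x * w x)) • (η x • ∇ w x + w x • ∇ η x) :=
    (hasGradientAt_comp (by simpa using hasDerivAt_pow 2 (η x * w x)) (hasGradientAt_mul
      (hasGradientAt_gradient hη x) (hasGradientAt_gradient hw x))).gradient
  calc ‖∇ (fun y ↦ (η y * w y) ^ 2) x‖
      ≤ 2 * |η x * w x| * (‖η x • ∇ w x‖ + ‖w x • ∇ η x‖) := by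
        rw [hgrad, norm_smul, norm_mul, norm_two, norm_eq_abs]
        gcongr
        exact norm_add_le _ _
    _ ≤ 2 * |η x * w x| ^ 2 + (‖η x • ∇ w x‖ ^ 2 + ‖w x • ∇ η x‖ ^ 2) := by
        linarith [two_mul_le_add_sq |η x * w x| ‖η x • ∇ w x‖,
          two_mul_le_add_sq |η x * w x| ‖w x • ∇ η x‖]
    _ = _ := by rw [sq_abs]

lemma one_add_inv_two_pow_sub_succ (k : ℕ) :
    (1 + (2 ^ k)⁻¹ : ℝ) - (1 + (2 ^ (k + 1))⁻¹) = (2 ^ (k + 1))⁻¹ := by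
  rw [pow_succ]
  field_simp
  ring

section Subsolution

variable {E : Type*} [NormedAddCommGroup E] [InnerProductSpace ℝ E] [FiniteDimensional ℝ E]
  [MeasurableSpace E] [BorelSpace E] {a : E → E →L[ℝ] E →L[ℝ] ℝ} {l L p r R K : ℝ}
  {v w η : E → ℝ} {c : E}

namespace IsWeakSubsolution

lemma comp (hv : IsWeakSubsolution a v) (ha : IsUniformlyElliptic a l L) {Φ : ℝ → ℝ} {s : Set ℝ}
    (hs : IsOpen s) (hΦ : ContDiffOn ℝ 2 Φ s) (hmono : MonotoneOn Φ s) (hconv : ConvexOn ℝ s Φ)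
    (hvs : ∀ x, v x ∈ s) : IsWeakSubsolution a fun x ↦ Φ (v x) := by
  have hΦ' : ContDiffOn ℝ 1 (deriv Φ) s := hΦ.deriv_of_isOpen hs (by norm_num)
  have hderiv (x : E) : HasDerivAt Φ (deriv Φ (v x)) (v x) :=
    ((hΦ.differentiableOn two_ne_zero).differentiableAt (hs.mem_nhds (hvs x))).hasDerivAt
  have hderiv' (x : E) : HasDerivAt (deriv Φ) (deriv (deriv Φ) (v x)) (v x) :=
    ((hΦ'.differentiableOn one_ne_zero).differentiableAt (hs.mem_nhds (hvs x))).hasDerivAt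
  have hv' := hasGradientAt_gradient hv.contDiff
  have hΦv : ContDiff ℝ 1 fun x ↦ Φ (v x) :=
    (hΦ.of_le one_le_two).comp_contDiff hv.contDiff hvs
  refine ⟨hΦv, fun φ hφ hφs hφ₀ ↦ ?_⟩
  let ψ : E → ℝ := fun x ↦ φ x * deriv Φ (v x)
  have hψ : ContDiff ℝ 1 ψ := hφ.mul (hΦ'.comp_contDiff hv.contDiff hvs)
  have hψs : HasCompactSupport ψ := hφs.mul_right
  have hform (x : E) :
      a x (∇ (fun y ↦ Φ (v y)) x) (∇ φ x) ≤ a x (∇ v x) (∇ ψ x) := by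
    have hΦ'' : 0 ≤ deriv (deriv Φ) (v x) := deriv_nonneg_of_monotoneOn hs
      (hconv.monotoneOn_deriv fun t ht ↦
        (hΦ.differentiableOn two_ne_zero).differentiableAt (hs.mem_nhds ht)) (hvs x)
    rw [(hasGradientAt_comp (hderiv x) (hv' x)).gradient, (hasGradientAt_mul
      (hasGradientAt_gradient hφ x) (hasGradientAt_comp (hderiv' x) (hv' x))).gradient]
    simp only [map_add, map_smul, smul_apply, smul_eq_mul]
    have := mul_nonneg (hφ₀ x) (mul_nonneg hΦ'' (ha.nonneg x (∇ v x)))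
    linarith
  have hint {ξ : E → E} (hξ : Continuous ξ) {χ : E → ℝ} (hχ : ContDiff ℝ 1 χ)
      (hχs : HasCompactSupport χ) : Integrable fun x ↦ a x (ξ x) (∇ χ x) :=
    ha.integrable_apply hξ (continuous_gradient hχ) (hasCompactSupport_gradient hχs)
  calc ∫ x, a x (∇ (fun y ↦ Φ (v y)) x) (∇ φ x)
      ≤ ∫ x, a x (∇ v x) (∇ ψ x) := integral_mono (hint (continuous_gradient hΦv) hφ hφs)
        (hint (continuous_gradient hv.contDiff) hψ hψs) hform
    _ ≤ 0 := hv.integral_le_zero ψ hψ hψs fun x ↦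
        mul_nonneg (hφ₀ x) (deriv_nonneg_of_monotoneOn hs hmono (hvs x))

-- The test function is `η² p q`.
lemma integral_norm_smul_gradient_sq_le (hv : IsWeakSubsolution a v)
    (ha : IsUniformlyElliptic a l L) {p q : E → ℝ} (hp : Continuous p) (hq : Continuous q)
    (hpq : ContDiff ℝ 1 fun x ↦ p x * q x) (hpq₀ : ∀ x, 0 ≤ p x * q x)
    (hgrad : ∀ x, ∇ (fun y ↦ p y * q y) x = q x ^ 2 • ∇ v x) (hη : ContDiff ℝ 1 η)
    (hηs : HasCompactSupport η) :
    ∫ x, ‖(η x * q x) • ∇ v x‖ ^ 2 ≤ (2 * L / l) ^ 2 * ∫ x, ‖p x • ∇ η x‖ ^ 2 := by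
  have hform (x : E) : a x ((η x * q x) • ∇ v x)
      ((η x * q x) • ∇ v x + (2 : ℝ) • p x • ∇ η x)
        = a x (∇ v x) (∇ (fun y ↦ η y ^ 2 * (p y * q y)) x) := by
    rw [(hasGradientAt_sq_mul (hasGradientAt_gradient hη x)
      (hasGradientAt_gradient hpq x)).gradient, hgrad]
    simp only [map_add, map_smul, smul_apply, smul_eq_mul]
    ring
  have hpos (x : E) : 0 ≤ η x ^ 2 * (p x * q x) := mul_nonneg (sq_nonneg _) (hpq₀ x)
  have hsq : HasCompactSupport fun x ↦ η x ^ 2 * (p x * q x) :=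
    .intro hηs fun x hx ↦ by simp [image_eq_zero_of_notMem_tsupport hx]
  refine ha.integral_norm_sq_le ((hη.continuous.mul hq).smul (continuous_gradient hv.contDiff))
    (.smul_right hηs.mul_right) (hp.smul (continuous_gradient hη))
    (.smul_left (hasCompactSupport_gradient hηs)) ?_
  simp_rw [hform]
  exact hv.integral_le_zero _ ((hη.pow 2).mul hpq) hsq hpos

lemma caccioppoli (hw : IsWeakSubsolution a w) (ha : IsUniformlyElliptic a l L)
    (hw₀ : ∀ x, 0 ≤ w x) (hη : ContDiff ℝ 1 η) (hηs : HasCompactSupport η) :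
    ∫ x, ‖η x • ∇ w x‖ ^ 2 ≤ (2 * L / l) ^ 2 * ∫ x, ‖w x • ∇ η x‖ ^ 2 := by
  simpa using hw.integral_norm_smul_gradient_sq_le ha hw.contDiff.continuous
    (continuous_const (y := (1 : ℝ))) (by simpa using hw.contDiff) (by simpa using hw₀) (by simp)
    hη hηs

end IsWeakSubsolution

namespace IsCutoff

lemma integral_sq_mul_le (hη : IsCutoff η c r R K) (hw : Continuous w) :
    ∫ x, (η x * w x) ^ 2 ≤ ∫ x in closedBall c R, w x ^ 2 := by
  rw [← one_mul (∫ x in _, _)]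
  refine integral_le_mul_setIntegral ((hη.contDiff.continuous.mul hw).pow 2) (hw.pow 2)
    (isCompact_closedBall c R) measurableSet_closedBall (fun x _ ↦ ?_) fun x hx ↦ ?_
  · simp only [Pi.mul_apply, Pi.pow_apply, mul_pow]
    gcongr
    exact pow_le_one₀ (hη.nonneg x) (hη.le_one x)
  · simp [hη.eq_zero x hx]

lemma integral_norm_smul_gradient_sq_le (hη : IsCutoff η c r R K) (hw : Continuous w) :
    ∫ x, ‖w x • ∇ η x‖ ^ 2 ≤ (K / (R - r)) ^ 2 * ∫ x in closedBall c R, w x ^ 2 := by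
  have hcont : Continuous fun x ↦ ‖w x • ∇ η x‖ ^ 2 :=
    (hw.smul (continuous_gradient hη.contDiff)).norm.pow 2
  refine integral_le_mul_setIntegral (g := fun x ↦ w x ^ 2) hcont (hw.pow 2)
    (isCompact_closedBall c R) measurableSet_closedBall (fun x _ ↦ ?_) fun x hx ↦ ?_
  · rw [norm_smul, norm_gradient, mul_pow, norm_eq_abs, sq_abs, mul_comm]
    gcongr
    exact hη.norm_fderiv_le x
  · rw [norm_smul, norm_gradient, hη.fderiv_eq_zero hx]
    simp

end IsCutoff

namespace IsWeakSubsolution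

lemma integral_norm_gradient_sq_mul_le (hw : IsWeakSubsolution a w)
    (ha : IsUniformlyElliptic a l L) (hw₀ : ∀ x, 0 ≤ w x) (hη : IsCutoff η c r R K) (hrR : r < R)
    (hR : R ≤ r + 1) :
    ∫ x, ‖∇ (fun y ↦ (η y * w y) ^ 2) x‖
      ≤ (2 + (1 + (2 * L / l) ^ 2) * K ^ 2) / (R - r) ^ 2 * ∫ x in closedBall c R, w x ^ 2 := by
  have hηc := hη.contDiff
  have hηs := hη.hasCompactSupport
  have hwc := hw.contDiff.continuous
  have hint₀ : Integrable fun x ↦ (η x * w x) ^ 2 := by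
    simpa only [Pi.mul_apply, norm_eq_abs, sq_abs] using
      integrable_norm_sq (μ := volume) (hηc.continuous.mul hwc) hηs.mul_right
  have hint₁ : Integrable fun x ↦ ‖η x • ∇ w x‖ ^ 2 :=
    integrable_norm_sq (hηc.continuous.smul (continuous_gradient hw.contDiff)) hηs.smul_right
  have hint₂ : Integrable fun x ↦ ‖w x • ∇ η x‖ ^ 2 :=
    integrable_norm_sq (hwc.smul (continuous_gradient hηc))
      (hasCompactSupport_gradient hηs).smul_left
  have hdist : 1 ≤ 1 / (R - r) ^ 2 := by
    rw [one_le_div (by nlinarith)]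
    nlinarith
  set J := ∫ x in closedBall c R, w x ^ 2
  have hJ : 0 ≤ J := integral_nonneg fun _ ↦ sq_nonneg _
  calc ∫ x, ‖∇ (fun y ↦ (η y * w y) ^ 2) x‖
      ≤ ∫ x, (2 * (η x * w x) ^ 2 + (‖η x • ∇ w x‖ ^ 2 + ‖w x • ∇ η x‖ ^ 2)) :=
        integral_mono_of_nonneg (.of_forall fun _ ↦ norm_nonneg _)
          ((hint₀.const_mul 2).add (hint₁.add hint₂))
          (.of_forall (norm_gradient_sq_mul_le hηc hw.contDiff))
    _ = 2 * (∫ x, (η x * w x) ^ 2)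
          + ((∫ x, ‖η x • ∇ w x‖ ^ 2) + ∫ x, ‖w x • ∇ η x‖ ^ 2) := by
        rw [← integral_const_mul, ← integral_add hint₁ hint₂]
        exact integral_add (hint₀.const_mul 2) (hint₁.add hint₂)
    _ ≤ 2 * J + (1 + (2 * L / l) ^ 2) * ∫ x, ‖w x • ∇ η x‖ ^ 2 := by
        linarith [hη.integral_sq_mul_le hwc, hw.caccioppoli ha hw₀ hηc hηs]
    _ ≤ 2 * (1 / (R - r) ^ 2 * J) + (1 + (2 * L / l) ^ 2) * ((K / (R - r)) ^ 2 * J) := by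
        gcongr
        · exact le_mul_of_one_le_left hJ hdist
        · exact hη.integral_norm_smul_gradient_sq_le hwc
    _ = _ := by
        field_simp

variable (E) in
lemma exists_moser_step (hp : (Module.finrank ℝ E : ℝ).HolderConjugate p) (l L : ℝ) :
    ∃ C : ℝ, 1 ≤ C ∧ ∀ {a : E → E →L[ℝ] E →L[ℝ] ℝ} {w : E → ℝ} {c : E} {r R : ℝ},
      IsUniformlyElliptic a l L → IsWeakSubsolution a w → (∀ x, 0 ≤ w x) → 0 < r → r < R →
      R ≤ r + 1 → ∫ x in closedBall c r, w x ^ (2 * p) ≤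
        (C / (R - r) ^ 2 * ∫ x in closedBall c R, w x ^ 2) ^ p := by
  obtain ⟨K, hK⟩ := exists_isCutoff E
  set S := (lintegralPowLePowLIntegralFDerivConst (volume : Measure E) p : ℝ)
  set C₀ := 2 + (1 + (2 * L / l) ^ 2) * K ^ 2
  have hp₀ := hp.symm.pos
  have hS : 0 ≤ S := NNReal.coe_nonneg _
  have : 0 ≤ C₀ := by positivity
  refine ⟨max 1 (S ^ p⁻¹ * C₀), le_max_left _ _, ?_⟩
  intro a w c r R ha hw hw₀ hr hrR hR
  obtain ⟨η, hη⟩ := hK c r R hr hrR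
  let g : E → ℝ := fun x ↦ (η x * w x) ^ 2
  have hg : ContDiff ℝ 1 g := (hη.contDiff.mul hw.contDiff).pow 2
  have hgs : HasCompactSupport g :=
    .intro hη.hasCompactSupport fun x hx ↦ by simp [g, image_eq_zero_of_notMem_tsupport hx]
  have hgp : Integrable fun x ↦ ‖g x‖ ^ p :=
    (hg.continuous.norm.rpow_const fun _ ↦ .inr hp₀.le).integrable_of_hasCompactSupport <|
      .intro hgs fun x hx ↦ by simp [image_eq_zero_of_notMem_tsupport hx, hp₀.ne']
  have hgw (x : E) (hx : x ∈ closedBall c r) : w x ^ (2 * p) = ‖g x‖ ^ p := by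
    simp [g, hη.eq_one x hx, rpow_mul (hw₀ x)]
  have hgrad := hw.integral_norm_gradient_sq_mul_le ha hw₀ hη hrR hR
  set J := ∫ x in closedBall c R, w x ^ 2
  have : 0 ≤ J := integral_nonneg fun _ ↦ sq_nonneg _
  calc ∫ x in closedBall c r, w x ^ (2 * p)
      = ∫ x in closedBall c r, ‖g x‖ ^ p := setIntegral_congr_fun measurableSet_closedBall hgw
    _ ≤ ∫ x, ‖g x‖ ^ p := setIntegral_le_integral hgp (.of_forall fun _ ↦ by positivity)
    _ ≤ S * (∫ x, ‖fderiv ℝ g x‖) ^ p :=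
        integral_norm_rpow_le_integral_norm_fderiv_rpow volume hp hg hgs
    _ ≤ S * (C₀ / (R - r) ^ 2 * J) ^ p := by
        simp only [← norm_gradient]
        gcongr
    _ = (S ^ p⁻¹ * C₀ / (R - r) ^ 2 * J) ^ p := by
        rw [mul_div_assoc, mul_assoc, mul_rpow (x := S ^ p⁻¹) (by positivity) (by positivity),
          rpow_inv_rpow hS hp₀.ne']
    _ ≤ _ := by
        gcongr
        exact le_max_right _ _

lemma rpow (hw : IsWeakSubsolution a w) (ha : IsUniformlyElliptic a l L) (hw₀ : ∀ x, 0 < w x)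
    {q : ℝ} (hq : 1 ≤ q) : IsWeakSubsolution a fun x ↦ w x ^ q :=
  hw.comp ha isOpen_Ioi
    (fun _ ht ↦ (contDiffAt_rpow_const_of_ne (ne_of_gt ht)).contDiffWithinAt)
    ((monotoneOn_rpow_Ici_of_exponent_nonneg (zero_le_one.trans hq)).mono Ioi_subset_Ici_self)
    ((convexOn_rpow hq).subset Ioi_subset_Ici_self (convex_Ioi 0)) hw₀

variable (E) in
lemma exists_moser_step_rpow (hp : (Module.finrank ℝ E : ℝ).HolderConjugate p) (l L : ℝ) :
    ∃ C : ℝ, 1 ≤ C ∧ ∀ {a : E → E →L[ℝ] E →L[ℝ] ℝ} {w : E → ℝ} {c : E} {r R q : ℝ},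
      IsUniformlyElliptic a l L → IsWeakSubsolution a w → (∀ x, 0 < w x) → 0 < r → r < R →
      R ≤ r + 1 → 1 ≤ q → ∫ x in closedBall c r, (w x ^ 2) ^ (q * p) ≤
        (C / (R - r) ^ 2 * ∫ x in closedBall c R, (w x ^ 2) ^ q) ^ p := by
  obtain ⟨C, hC, hmoser⟩ := exists_moser_step E hp l L
  refine ⟨C, hC, ?_⟩
  intro a w c r R q ha hw hw₀ hr hrR hR hq
  have hsq (x : E) (t : ℝ) : (w x ^ 2) ^ t = (w x ^ t) ^ 2 := by
    rw [← rpow_two, ← rpow_two, ← rpow_mul (hw₀ x).le, ← rpow_mul (hw₀ x).le, mul_comm]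
  have hsqp (x : E) : (w x ^ 2) ^ (q * p) = (w x ^ q) ^ (2 * p) := by
    rw [rpow_mul (sq_nonneg _), hsq, ← rpow_two, ← rpow_mul (rpow_nonneg (hw₀ x).le q)]
  simp only [hsqp, hsq _ q]
  exact hmoser ha (hw.rpow ha hw₀ hq) (fun x ↦ rpow_nonneg (hw₀ x).le q) hr hrR hR

variable (E) in
lemma exists_moser_step_dyadic (hp : (Module.finrank ℝ E : ℝ).HolderConjugate p) (l L : ℝ) :
    ∃ C : ℝ, 1 ≤ C ∧ ∀ {a : E → E →L[ℝ] E →L[ℝ] ℝ} {w : E → ℝ} {c : E} {q : ℝ},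
      IsUniformlyElliptic a l L → IsWeakSubsolution a w → (∀ x, 0 < w x) → 1 ≤ q → ∀ k : ℕ,
      ∫ x in closedBall c (1 + (2 ^ (k + 1))⁻¹), (w x ^ 2) ^ (q * p) ≤
        (C * 4 ^ k * ∫ x in closedBall c (1 + (2 ^ k)⁻¹), (w x ^ 2) ^ q) ^ p := by
  obtain ⟨C, hC, hmoser⟩ := exists_moser_step_rpow E hp l L
  refine ⟨4 * C, by linarith, ?_⟩
  intro a w c q ha hw hw₀ hq k
  have hdiff := one_add_inv_two_pow_sub_succ k
  have hgap : C / (1 + (2 ^ k)⁻¹ - (1 + (2 ^ (k + 1))⁻¹)) ^ 2 = 4 * C * 4 ^ k := by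
    rw [hdiff, inv_pow, div_inv_eq_mul, pow_right_comm, pow_succ]
    norm_num
    ring
  have hpos : (0 : ℝ) < (2 ^ (k + 1))⁻¹ := by positivity
  have hle : ((2 : ℝ) ^ (k + 1))⁻¹ ≤ 1 := inv_le_one_of_one_le₀ (one_le_pow₀ one_le_two)
  rw [← hgap]
  exact hmoser ha hw hw₀ (by positivity) (by linarith) (by linarith) hq

variable (E) in
lemma exists_sq_le_mul_setIntegral_sq (hp : (Module.finrank ℝ E : ℝ).HolderConjugate p)
    (l L : ℝ) :
    ∃ A : ℝ, 0 < A ∧ ∀ {a : E → E →L[ℝ] E →L[ℝ] ℝ} {w : E → ℝ} {c x : E},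
      IsUniformlyElliptic a l L → IsWeakSubsolution a w → (∀ x, 0 < w x) → x ∈ ball c 1 →
      w x ^ 2 ≤ A * ∫ y in closedBall c 2, w y ^ 2 := by
  have hp₁ : 1 < p := hp.symm.lt
  obtain ⟨C, hC, hmoser⟩ := exists_moser_step_dyadic E hp l L
  obtain ⟨A, hA, hiter⟩ := exists_forall_le_rpow_of_le_rpow hp₁ (b := 4) (C := C)
    (by norm_num) (by linarith)
  refine ⟨A, hA, ?_⟩
  intro a w c x ha hw hw₀ hx
  let ρ : ℕ → ℝ := fun k ↦ 1 + (2 ^ k)⁻¹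
  let I : ℕ → ℝ := fun k ↦ ∫ y in closedBall c (ρ k), (w y ^ 2) ^ p ^ k
  have hI (k : ℕ) : 0 ≤ I k := integral_nonneg fun _ ↦ by positivity
  have hstep (k : ℕ) : I (k + 1) ≤ (C * 4 ^ k * I k) ^ p :=
    hmoser ha hw hw₀ (one_le_pow₀ hp₁.le) k
  have hI₀ : I 0 = ∫ y in closedBall c 2, w y ^ 2 := by
    simp [I, ρ, one_add_one_eq_two]
  rw [← hI₀]
  have hint (k : ℕ) : IntegrableOn (fun y ↦ (w y ^ 2) ^ p ^ k) (closedBall c (ρ k)) :=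
    ((hw.contDiff.continuous.pow 2).rpow_const fun _ ↦ .inr (by positivity)).continuousOn
      |>.integrableOn_compact (isCompact_closedBall _ _)
  have hsub (k : ℕ) : ball c 1 ⊆ closedBall c (ρ k) :=
    ball_subset_closedBall.trans (closedBall_subset_closedBall (by simp [ρ]))
  refine le_of_forall_setIntegral_rpow_le (μ := volume) (g := fun y ↦ w y ^ 2)
    (hw.contDiff.continuous.pow 2) (fun y ↦ sq_nonneg _) isOpen_ball measure_ball_lt_top.ne
    (tendsto_pow_atTop_atTop_of_one_lt hp₁) (fun k ↦ (hint k).mono_set (hsub k))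
    (mul_nonneg hA.le (hI 0)) (fun k ↦ ?_) hx
  exact (setIntegral_mono_set (hint k) (.of_forall fun y ↦ by positivity)
    (hsub k).eventuallyLE).trans (hiter I hI hstep k)

end IsWeakSubsolution

end Subsolution

/-! ### Oscillation decay and the linear Liouville theorem -/

lemma convexOn_const_sub_log_const_sub (k b : ℝ) :
    ConvexOn ℝ (Iio b) fun t ↦ k - log (b - t) := by
  refine ⟨convex_Iio b, fun s hs t ht α β hα hβ hαβ ↦ ?_⟩
  have hlog := strictConcaveOn_log_Ioi.concaveOn.2 (mem_Ioi.2 (sub_pos.2 hs))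
    (mem_Ioi.2 (sub_pos.2 ht)) hα hβ hαβ
  have hpt : α • (b - s) + β • (b - t) = b - (α • s + β • t) := by
    simp only [smul_eq_mul]
    linear_combination b * hαβ
  rw [hpt] at hlog
  simp only [smul_eq_mul] at hlog ⊢
  linear_combination hlog - k * hαβ

lemma hasGradientAt_const_sub_log_const_sub {E : Type*} [NormedAddCommGroup E]
    [InnerProductSpace ℝ E] [CompleteSpace E] {f : E → ℝ} {f' x : E} (hf : HasGradientAt f f' x)
    (k : ℝ) {b : ℝ} (hb : f x < b) :
    HasGradientAt (fun y ↦ k - log (b - f y)) ((b - f x)⁻¹ • f') x :=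
  hasGradientAt_comp (Φ := fun t ↦ k - log (b - t))
    (((((hasDerivAt_id (f x)).const_sub b).log (sub_pos.2 hb).ne').const_sub k).congr_deriv
      (by simp [neg_div])) hf

section Decay

variable {E : Type*} [NormedAddCommGroup E] [InnerProductSpace ℝ E] [FiniteDimensional ℝ E]
  [MeasurableSpace E] [BorelSpace E] {a : E → E →L[ℝ] E →L[ℝ] ℝ} {l L p r R K b : ℝ}
  {v η : E → ℝ} {c : E}

namespace IsWeakSubsolution

lemma const_sub_log_const_sub (hv : IsWeakSubsolution a v) (ha : IsUniformlyElliptic a l L)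
    (hvb : ∀ x, v x < b) (k : ℝ) : IsWeakSubsolution a fun x ↦ k - log (b - v x) := by
  refine hv.comp (Φ := fun t ↦ k - log (b - t)) ha isOpen_Iio ?_ ?_
    (convexOn_const_sub_log_const_sub k b) hvb
  · exact contDiffOn_const.sub <| (contDiffOn_const.sub contDiffOn_id).log
      fun t ht ↦ (sub_pos.2 ht).ne'
  · intro s _ t ht hst
    exact sub_le_sub_left (log_le_log (sub_pos.2 ht) (by linarith)) k

-- The test function is `η² (b - v)⁻¹`.
lemma setIntegral_norm_gradient_log_sq_le (hv : IsWeakSubsolution a v)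
    (ha : IsUniformlyElliptic a l L) (hvb : ∀ x, v x < b) (k : ℝ) (hη : IsCutoff η c r R K) :
    ∫ x in closedBall c r, ‖∇ (fun y ↦ k - log (b - v y)) x‖ ^ 2
      ≤ (2 * L / l) ^ 2 * ((K / (R - r)) ^ 2 * volume.real (closedBall c R)) := by
  have hpos (x : E) : 0 < b - v x := sub_pos.2 (hvb x)
  have hv' := hasGradientAt_gradient hv.contDiff
  let q : E → ℝ := fun x ↦ (b - v x)⁻¹
  have hq : ContDiff ℝ 1 q := (contDiff_const.sub hv.contDiff).inv fun x ↦ (hpos x).ne'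
  have hq' (x : E) : HasGradientAt q (q x ^ 2 • ∇ v x) x :=
    hasGradientAt_comp (Φ := fun t ↦ (b - t)⁻¹)
      ((((hasDerivAt_id (v x)).const_sub b).fun_inv (hpos x).ne').congr_deriv (by simp [q])) (hv' x)
  have henergy := hv.integral_norm_smul_gradient_sq_le ha (p := fun _ ↦ 1) continuous_const
    hq.continuous (by simpa using hq) (fun x ↦ by simpa [q] using (hvb x).le)
    (fun x ↦ by simpa using (hq' x).gradient) hη.contDiff hη.hasCompactSupport
  have hint : Integrable fun x ↦ ‖(η x * q x) • ∇ v x‖ ^ 2 :=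
    integrable_norm_sq
      ((hη.contDiff.continuous.mul hq.continuous).smul (continuous_gradient hv.contDiff))
      (HasCompactSupport.smul_right hη.hasCompactSupport.mul_right)
  calc ∫ x in closedBall c r, ‖∇ (fun y ↦ k - log (b - v y)) x‖ ^ 2
      = ∫ x in closedBall c r, ‖(η x * q x) • ∇ v x‖ ^ 2 :=
        setIntegral_congr_fun measurableSet_closedBall fun x hx ↦ by
          simp [(hasGradientAt_const_sub_log_const_sub (hv' x) k (hvb x)).gradient,
            hη.eq_one x hx, q]
    _ ≤ ∫ x, ‖(η x * q x) • ∇ v x‖ ^ 2 :=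
        setIntegral_le_integral hint (.of_forall fun _ ↦ sq_nonneg _)
    _ ≤ (2 * L / l) ^ 2 * ∫ x, ‖(1 : ℝ) • ∇ η x‖ ^ 2 := henergy
    _ ≤ _ := by
        gcongr
        simpa using hη.integral_norm_smul_gradient_sq_le (continuous_const (y := (1 : ℝ)))

variable (E) in
lemma exists_setIntegral_sq_log_le (l L : ℝ) :
    ∃ M : ℝ, ∀ {a : E → E →L[ℝ] E →L[ℝ] ℝ} {v : E → ℝ}, IsUniformlyElliptic a l L →
      IsWeakSubsolution a v → (∀ x, |v x| < 1) →
      volume.real (closedBall (0 : E) 2) ≤ 2 * volume.real (closedBall (0 : E) 2 ∩ {x | v x ≤ 0}) →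
      ∫ x in closedBall (0 : E) 2, (1 + log 2 - log (1 - v x)) ^ 2 ≤ M := by
  obtain ⟨K, hK⟩ := exists_isCutoff E
  obtain ⟨η, hη⟩ := hK 0 2 3 two_pos (by norm_num)
  refine ⟨4 * 4 ^ 2 * 2 ^ Module.finrank ℝ E
    * ((2 * L / l) ^ 2 * ((K / (3 - 2)) ^ 2 * volume.real (closedBall (0 : E) 3)))
      + 2 * (1 + log 2) ^ 2 * volume.real (closedBall (0 : E) 2), ?_⟩
  intro a v ha hv hv₁ hhalf
  let w : E → ℝ := fun x ↦ 1 + log 2 - log (1 - v x)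
  have hlt (x : E) : v x < 1 := (abs_lt.1 (hv₁ x)).2
  have hw := hv.const_sub_log_const_sub ha hlt (1 + log 2)
  have hlog₂ : 0 < log 2 := log_pos one_lt_two
  have hw_le : ∀ y ∈ closedBall (0 : E) 2 ∩ {x | v x ≤ 0}, ‖w y‖ ≤ 1 + log 2 := by
    rintro y ⟨-, hy : v y ≤ 0⟩
    have hlog : 0 ≤ log (1 - v y) := log_nonneg (by linarith)
    have hlog' : log (1 - v y) ≤ log 2 :=
      log_le_log (sub_pos.2 (hlt y)) (by linarith [(abs_lt.1 (hv₁ y)).1])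
    rw [norm_eq_abs, abs_le]
    constructor <;> simp only [w] <;> linarith
  have hpoincare := setIntegral_norm_sq_le_of_half_measure (μ := volume) (w := w) (d := 4)
    hw.contDiff (isCompact_closedBall 0 2) (convex_closedBall 0 2)
    (measurableSet_closedBall.inter
      (isClosed_le hv.contDiff.continuous continuous_const).measurableSet) inter_subset_left
    (fun x hx y hy ↦ (norm_sub_le x y).trans
      (by linarith [mem_closedBall_zero_iff.1 hx, mem_closedBall_zero_iff.1 hy])) hw_le hhalf
  simp only [norm_eq_abs, sq_abs, ← norm_gradient] at hpoincare
  refine hpoincare.trans ?_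
  gcongr
  exact hv.setIntegral_norm_gradient_log_sq_le ha hlt _ hη

variable (E) in
lemma exists_le_one_sub_of_half_measure (hp : (Module.finrank ℝ E : ℝ).HolderConjugate p)
    (l L : ℝ) :
    ∃ δ : ℝ, 0 < δ ∧ ∀ {a : E → E →L[ℝ] E →L[ℝ] ℝ} {v : E → ℝ}, IsUniformlyElliptic a l L →
      IsWeakSubsolution a v → (∀ x, |v x| < 1) →
      volume.real (closedBall (0 : E) 2) ≤ 2 * volume.real (closedBall (0 : E) 2 ∩ {x | v x ≤ 0}) →
      ∀ x ∈ ball (0 : E) 1, v x ≤ 1 - δ := by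
  obtain ⟨A, hA, hsup⟩ := exists_sq_le_mul_setIntegral_sq E hp l L
  obtain ⟨M, hM⟩ := exists_setIntegral_sq_log_le E l L
  refine ⟨exp (1 + log 2 - √(A * M)), exp_pos _, ?_⟩
  intro a v ha hv hv₁ hhalf x hx
  have hpos (y : E) : 0 < 1 - v y := sub_pos.2 (abs_lt.1 (hv₁ y)).2
  have hw := hv.const_sub_log_const_sub ha (fun y ↦ sub_pos.1 (hpos y)) (1 + log 2)
  have hw₀ (y : E) : 0 < 1 + log 2 - log (1 - v y) := by
    linarith [log_le_log (hpos y) (by linarith [(abs_lt.1 (hv₁ y)).1] : 1 - v y ≤ 2)]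
  have hsq : (1 + log 2 - log (1 - v x)) ^ 2 ≤ A * M :=
    (hsup ha hw hw₀ hx).trans (mul_le_mul_of_nonneg_left (hM ha hv hv₁ hhalf) hA.le)
  have hexp : exp (1 + log 2 - √(A * M)) ≤ 1 - v x :=
    (le_log_iff_exp_le (hpos x)).1 (by linarith [le_sqrt_of_sq_le hsq])
  linarith

end IsWeakSubsolution

lemma measureReal_le_two_mul_inter_or {X : Type*} [MeasurableSpace X] {μ : Measure X} {B : Set X}
    (hB : μ B ≠ ⊤) (f : X → ℝ) :
    μ.real B ≤ 2 * μ.real (B ∩ {x | f x ≤ 0}) ∨ μ.real B ≤ 2 * μ.real (B ∩ {x | -f x ≤ 0}) := by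
  have hcover : B ⊆ B ∩ {x | f x ≤ 0} ∪ B ∩ {x | -f x ≤ 0} := fun x hx ↦
    (le_total (f x) 0).imp (⟨hx, ·⟩) (⟨hx, neg_nonpos.2 ·⟩)
  have hfin (s : Set X) : μ (B ∩ s) ≠ ⊤ := ne_top_of_le_ne_top hB (measure_mono inter_subset_left)
  have hle : μ.real B ≤ μ.real (B ∩ {x | f x ≤ 0}) + μ.real (B ∩ {x | -f x ≤ 0}) :=
    (measureReal_mono hcover (measure_union_ne_top (hfin _) (hfin _))).trans
      (measureReal_union_le _ _)
  by_contra! h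
  linarith

lemma eq_of_forall_le_or_ge {X : Type*} {f : X → ℝ} (hbdd : Bornology.IsBounded (range f)) {δ : ℝ}
    (hδ : 0 < δ) (hosc : ∀ m M, (∀ x, f x ∈ Ioo m M) →
      ∀ x y, f x ≤ M - δ * (M - m) ∨ m + δ * (M - m) ≤ f y) (x y : X) : f x = f y := by
  have hne : (range f).Nonempty := ⟨f x, mem_range_self x⟩
  set M := sSup (range f)
  set m := sInf (range f)
  have hle (z : X) : f z ≤ M := le_csSup hbdd.bddAbove (mem_range_self z)
  have hge (z : X) : m ≤ f z := csInf_le hbdd.bddBelow (mem_range_self z)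
  suffices hmM : M ≤ m from
    ((hle x).trans (hmM.trans (hge y))).antisymm ((hle y).trans (hmM.trans (hge x)))
  by_contra! hmM
  have hε : 0 < δ * (M - m) / 2 := half_pos (mul_pos hδ (sub_pos.2 hmM))
  set ε := δ * (M - m) / 2 with hε_def
  obtain ⟨_, ⟨x₁, rfl⟩, hx₁⟩ := exists_lt_of_lt_csSup hne (sub_lt_self M hε)
  obtain ⟨_, ⟨x₂, rfl⟩, hx₂⟩ := exists_lt_of_csInf_lt hne (lt_add_of_pos_right m hε)
  have hgap : 2 * ε ≤ δ * ((M + ε) - (m - ε)) := by nlinarith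
  rcases hosc (m - ε) (M + ε) (fun z ↦ ⟨by linarith [hge z], by linarith [hle z]⟩) x₁ x₂
    with h | h <;> linarith

namespace IsWeakSolution

variable (E) in
lemma exists_le_or_ge_on_unitBall (hp : (Module.finrank ℝ E : ℝ).HolderConjugate p) (l L : ℝ) :
    ∃ δ : ℝ, 0 < δ ∧ ∀ {a : E → E →L[ℝ] E →L[ℝ] ℝ} {v : E → ℝ}, IsUniformlyElliptic a l L →
      IsWeakSolution a v → (∀ x, |v x| < 1) →
      (∀ x ∈ ball (0 : E) 1, v x ≤ 1 - δ) ∨ ∀ x ∈ ball (0 : E) 1, δ - 1 ≤ v x := by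
  obtain ⟨δ, hδ, hdecay⟩ := IsWeakSubsolution.exists_le_one_sub_of_half_measure E hp l L
  refine ⟨δ, hδ, ?_⟩
  intro a v ha hv hv₁
  have hneg : IsWeakSolution a fun x ↦ -v x := by simpa using hv.const_mul_add_const (-1) 0
  refine (measureReal_le_two_mul_inter_or measure_closedBall_lt_top.ne v).imp
    (hdecay ha hv.isWeakSubsolution hv₁) fun hhalf x hx ↦ ?_
  linarith [hdecay ha hneg.isWeakSubsolution (by simpa using hv₁) hhalf x hx]

variable (E) in
lemma exists_le_or_ge_on_ball (hp : (Module.finrank ℝ E : ℝ).HolderConjugate p) (l L : ℝ) :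
    ∃ δ : ℝ, 0 < δ ∧ ∀ {a : E → E →L[ℝ] E →L[ℝ] ℝ} {v : E → ℝ} {m M R : ℝ},
      IsUniformlyElliptic a l L → IsWeakSolution a v → (∀ x, v x ∈ Ioo m M) → 0 < R →
      (∀ x ∈ ball (0 : E) R, v x ≤ M - δ * (M - m)) ∨
        ∀ x ∈ ball (0 : E) R, m + δ * (M - m) ≤ v x := by
  obtain ⟨δ, hδ, hunit⟩ := exists_le_or_ge_on_unitBall E hp l L
  refine ⟨δ / 2, half_pos hδ, ?_⟩
  intro a v m M R ha hv hvmM hR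
  have hmM : 0 < M - m := by linarith [(hvmM 0).1, (hvmM 0).2]
  let V : E → ℝ := fun x ↦ 2 / (M - m) * v x - (M + m) / (M - m)
  have hV (x : E) : 2 * v x = (M - m) * V x + (M + m) := by
    simp only [V]
    field_simp
    ring
  have hV₁ (x : E) : |V x| < 1 := by
    rw [abs_lt]
    constructor <;> nlinarith [hV x, (hvmM x).1, (hvmM x).2]
  have hball (x : E) (hx : x ∈ ball (0 : E) R) : R⁻¹ • x ∈ ball (0 : E) 1 := by
    rw [mem_ball_zero_iff] at hx ⊢
    rwa [norm_smul, norm_inv, norm_of_nonneg hR.le, inv_mul_lt_one₀ hR]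
  have hscaled : IsWeakSolution (fun x ↦ a (R • x)) fun x ↦ V (R • x) :=
    (hv.const_mul_add_const (2 / (M - m)) (-((M + m) / (M - m)))).comp_smul hR.ne'
  refine (hunit (ha.comp_continuous (continuous_const_smul R)) hscaled fun x ↦ hV₁ _).imp
    (fun h x hx ↦ ?_) fun h x hx ↦ ?_
  all_goals
    have hx' := h _ (hball x hx)
    rw [smul_inv_smul₀ hR.ne'] at hx'
    nlinarith [hV x]

theorem eq_of_isBounded_range (hv : IsWeakSolution a v) (ha : IsUniformlyElliptic a l L)
    (hE : 1 < Module.finrank ℝ E) (hbdd : Bornology.IsBounded (range v)) (x y : E) :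
    v x = v y := by
  obtain ⟨δ, hδ, hosc⟩ :=
    exists_le_or_ge_on_ball E (HolderConjugate.conjExponent (Nat.one_lt_cast.2 hE)) l L
  refine eq_of_forall_le_or_ge hbdd hδ (fun m M hvmM x y ↦ ?_) x y
  have hx : x ∈ ball (0 : E) (‖x‖ + ‖y‖ + 1) := by
    rw [mem_ball_zero_iff]
    linarith [norm_nonneg y]
  have hy : y ∈ ball (0 : E) (‖x‖ + ‖y‖ + 1) := by
    rw [mem_ball_zero_iff]
    linarith [norm_nonneg x]
  exact (hosc ha hv hvmM (by positivity)).imp (· x hx) (· y hy)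

end IsWeakSolution

end Decay

/-! ### Differentiating the quasilinear equation -/

section SecondDerivative

variable {E F : Type*} [NormedAddCommGroup E] [NormedSpace ℝ E] [NormedAddCommGroup F]
  [NormedSpace ℝ F]

lemma fderiv_clm_apply_const {G : E → E →L[ℝ] F} {x : E} (hG : DifferentiableAt ℝ G x) (v w : E) :
    fderiv ℝ (fun y ↦ G y v) x w = fderiv ℝ G x w v := by
  simp [(hG.hasFDerivAt.clm_apply (hasFDerivAt_const v x)).fderiv]

lemma differentiable_fderiv {f : E → F} (hf : ContDiff ℝ 2 f) : Differentiable ℝ (fderiv ℝ f) :=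
  (hf.fderiv_right (m := 1) (by norm_num)).differentiable one_ne_zero

lemma fderiv_fderiv_apply_comm {f : E → F} (hf : ContDiff ℝ 2 f) (x v w : E) :
    fderiv ℝ (fderiv ℝ f) x v w = fderiv ℝ (fderiv ℝ f) x w v :=
  hf.contDiffAt.isSymmSndFDerivAt (by simp) v w

lemma divergence_fderiv_apply_eq_zero {ι : Type*} [Fintype ι] (e : ι → E)
    {G : E → E →L[ℝ] F} (hG : ContDiff ℝ 2 G)
    (hdiv : ∀ x, ∑ i, fderiv ℝ G x (e i) (e i) = 0) (v x : E) :
    ∑ i, fderiv ℝ (fun y ↦ fderiv ℝ G y v) x (e i) (e i) = 0 := by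
  have hdG := differentiable_fderiv hG
  have happly (i : ι) : DifferentiableAt ℝ (fun y ↦ fderiv ℝ G y (e i)) x :=
    (hdG x).clm_apply (differentiableAt_const _)
  calc ∑ i, fderiv ℝ (fun y ↦ fderiv ℝ G y v) x (e i) (e i)
      = ∑ i, fderiv ℝ (fun y ↦ fderiv ℝ G y (e i) (e i)) x v := by
        refine Finset.sum_congr rfl fun i _ ↦ ?_
        rw [fderiv_clm_apply_const (hdG x), fderiv_fderiv_apply_comm hG,
          fderiv_clm_apply_const (happly i), fderiv_clm_apply_const (hdG x)]
    _ = fderiv ℝ (fun y ↦ ∑ i, fderiv ℝ G y (e i) (e i)) x v := by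
        rw [fderiv_fun_sum fun i _ ↦ (happly i).clm_apply (differentiableAt_const _)]
        simp
    _ = 0 := by simp [hdiv]

lemma fderiv_const_of_finrank_le_one {ι : Type*} [Fintype ι] (e : Module.Basis ι ℝ E)
    (hE : Module.finrank ℝ E ≤ 1) {u : E → ℝ} (hu : ContDiff ℝ 2 u)
    {B : E → E →L[ℝ] E →L[ℝ] ℝ} (hpos : ∀ x v, v ≠ 0 → 0 < B x v v)
    (heq : ∀ x, ∑ i, ∑ j, B x (e i) (e j) * fderiv ℝ (fderiv ℝ u) x (e i) (e j) = 0) (x y : E) :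
    fderiv ℝ u x = fderiv ℝ u y := by
  have : Subsingleton ι := by
    rwa [← Fintype.card_le_one_iff_subsingleton, ← Module.finrank_eq_card_basis e]
  refine is_const_of_fderiv_eq_zero (𝕜 := ℝ) (differentiable_fderiv hu) (fun z ↦ ?_) x y
  refine ContinuousLinearMap.coe_injective (e.ext fun i ↦ ?_)
  refine ContinuousLinearMap.coe_injective (e.ext fun j ↦ ?_)
  have hz := heq z
  rw [Fintype.sum_subsingleton _ i, Fintype.sum_subsingleton _ j, Subsingleton.elim i j] at hz
  simpa [Subsingleton.elim i j, (hpos z (e j) (e.ne_zero j)).ne'] using hz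

end SecondDerivative

section GradientDerivative

variable {E : Type*} [NormedAddCommGroup E] [InnerProductSpace ℝ E] [CompleteSpace E] {u : E → ℝ}

lemma inner_fderiv_gradient (hu : ContDiff ℝ 2 u) (x v w : E) :
    inner ℝ (fderiv ℝ (∇ u) x v) w = fderiv ℝ (fderiv ℝ u) x v w := by
  have hgrad : HasFDerivAt (∇ u) _ x :=
    (InnerProductSpace.toDual ℝ E).symm.toContinuousLinearEquiv.hasFDerivAt.comp x
      (differentiable_fderiv hu x).hasFDerivAt
  rw [hgrad.fderiv]
  exact InnerProductSpace.toDual_symm_apply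

lemma gradient_fderiv_apply (hu : ContDiff ℝ 2 u) (x v : E) :
    ∇ (fun y ↦ fderiv ℝ u y v) x = fderiv ℝ (∇ u) x v := by
  refine ext_inner_right ℝ fun w ↦ ?_
  rw [inner_gradient_left, fderiv_clm_apply_const (differentiable_fderiv hu x),
    fderiv_fderiv_apply_comm hu, inner_fderiv_gradient hu]

lemma exists_eq_inner_add_const_of_fderiv_const (hu : Differentiable ℝ u)
    (hconst : ∀ x y, fderiv ℝ u x = fderiv ℝ u y) :
    ∃ (b : E) (c : ℝ), ∀ x, u x = inner ℝ b x + c := by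
  refine ⟨∇ u 0, u 0, fun x ↦ ?_⟩
  have hdiff := is_const_of_fderiv_eq_zero (𝕜 := ℝ) (hu.sub (fderiv ℝ u 0).differentiable)
    (fun y ↦ by
      rw [fderiv_sub (hu y) (fderiv ℝ u 0).differentiableAt, ContinuousLinearMap.fderiv,
        hconst y 0, sub_self]) x 0
  simp only [Pi.sub_apply, map_zero, sub_zero] at hdiff
  rw [inner_gradient_left, ← hdiff, add_sub_cancel]

end GradientDerivative

lemma exists_isUniformlyElliptic_comp {E : Type*} [NormedAddCommGroup E] [NormedSpace ℝ E]
    [FiniteDimensional ℝ E] {A : E → E →L[ℝ] E →L[ℝ] ℝ} (hA : Continuous A)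
    (hpos : ∀ p v, v ≠ 0 → 0 < A p v v) {g : E → E} (hg : Continuous g)
    (hbdd : Bornology.IsBounded (range g)) :
    ∃ l L, IsUniformlyElliptic (fun x ↦ A (g x)) l L := by
  have : ProperSpace E := FiniteDimensional.proper_real E
  have hK : IsCompact (closure (range g)) := hbdd.isCompact_closure
  have hgK (x : E) : g x ∈ closure (range g) := subset_closure (mem_range_self x)
  obtain ⟨L, hL⟩ := hK.exists_bound_of_continuousOn (f := A) hA.continuousOn
  obtain ⟨l, hl, hlA⟩ := (hK.prod (isCompact_sphere (0 : E) 1)).exists_forall_le' (a := 0)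
    (f := fun z ↦ A z.1 z.2 z.2) (by fun_prop)
    fun z hz ↦ hpos _ _ (ne_zero_of_mem_unit_sphere ⟨z.2, hz.2⟩)
  refine ⟨l, L, hl, hA.comp hg, fun x ξ ↦ ?_, fun x ↦ hL _ (hgK x)⟩
  rcases eq_or_ne ξ 0 with rfl | hξ
  · simp
  have hξ' : ‖ξ‖ ≠ 0 := norm_ne_zero_iff.2 hξ
  have hunit := hlA (g x, ‖ξ‖⁻¹ • ξ) ⟨hgK x, by simp [norm_smul, hξ']⟩
  simp only [map_smul, smul_apply, smul_eq_mul] at hunit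
  calc l * ‖ξ‖ ^ 2 ≤ ‖ξ‖⁻¹ * (‖ξ‖⁻¹ * A (g x) ξ ξ) * ‖ξ‖ ^ 2 := by gcongr
    _ = A (g x) ξ ξ := by field_simp

section Quasilinear

variable {E ι : Type*} [NormedAddCommGroup E] [InnerProductSpace ℝ E] [FiniteDimensional ℝ E]
  [Fintype ι] (e : OrthonormalBasis ι ℝ E) {H u : E → ℝ}

lemma integral_apply_gradient_eq_neg_integral_divergence_mul [MeasurableSpace E] [BorelSpace E]
    {F : E → E →L[ℝ] ℝ} (hF : ContDiff ℝ 1 F) {φ : E → ℝ} (hφ : ContDiff ℝ 1 φ)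
    (hφc : HasCompactSupport φ) :
    ∫ x, F x (∇ φ x) = -∫ x, (∑ i, fderiv ℝ F x (e i) (e i)) * φ x := by
  have : Continuous (fderiv ℝ F) := hF.continuous_fderiv one_ne_zero
  have : Continuous (fderiv ℝ φ) := hφ.continuous_fderiv one_ne_zero
  have hF_int (i : ι) : Integrable fun x ↦ F x (e i) * fderiv ℝ φ x (e i) :=
    (by fun_prop : Continuous _).integrable_of_hasCompactSupport
      (hφc.fderiv_apply ℝ (e i)).mul_left
  have hdF_int (i : ι) : Integrable fun x ↦ fderiv ℝ F x (e i) (e i) * φ x :=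
    (by fun_prop : Continuous _).integrable_of_hasCompactSupport hφc.mul_left
  have hFφ_int (i : ι) : Integrable fun x ↦ F x (e i) * φ x :=
    (by fun_prop : Continuous _).integrable_of_hasCompactSupport hφc.mul_left
  have hFd (x : E) : DifferentiableAt ℝ F x := hF.differentiable one_ne_zero x
  have hparts (i : ι) :
      ∫ x, F x (e i) * fderiv ℝ φ x (e i) = -∫ x, fderiv ℝ F x (e i) (e i) * φ x := by
    simp only [← fderiv_clm_apply_const (hFd _)] at hdF_int ⊢
    exact integral_mul_fderiv_eq_neg_fderiv_mul_of_integrable (hdF_int i) (hF_int i) (hFφ_int i)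
      (fun x _ ↦ (hFd x).clm_apply (differentiableAt_const _))
      fun x _ ↦ hφ.differentiable one_ne_zero x
  have hcoord (x : E) : F x (∇ φ x) = ∑ i, F x (e i) * fderiv ℝ φ x (e i) := by
    conv_lhs => rw [← e.sum_repr' (∇ φ x)]
    simp [mul_comm]
  simp only [hcoord, Finset.sum_mul]
  rw [integral_finsetSum _ fun i _ ↦ hF_int i, integral_finsetSum _ fun i _ ↦ hdF_int i,
    ← Finset.sum_neg_distrib]
  exact Finset.sum_congr rfl fun i _ ↦ hparts i

lemma sum_apply_fderiv_gradient (hu : ContDiff ℝ 2 u) (B : E →L[ℝ] E →L[ℝ] ℝ) (x : E) :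
    ∑ i, B (fderiv ℝ (∇ u) x (e i)) (e i) =
      ∑ i, ∑ j, B (e i) (e j) * fderiv ℝ (fderiv ℝ u) x (e i) (e j) := by
  have hcoord (j : ι) : fderiv ℝ (∇ u) x (e j) =
      ∑ i, fderiv ℝ (fderiv ℝ u) x (e i) (e j) • e i := by
    conv_lhs => rw [← e.sum_repr' (fderiv ℝ (∇ u) x (e j))]
    refine Finset.sum_congr rfl fun i _ ↦ ?_
    rw [real_inner_comm, inner_fderiv_gradient hu, fderiv_fderiv_apply_comm hu]
  rw [Finset.sum_comm]
  simp [hcoord, mul_comm]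

lemma isWeakSolution_fderiv_apply [MeasurableSpace E] [BorelSpace E] (hH : ContDiff ℝ 3 H)
    (hu : ContDiff ℝ 3 u)
    (heq : ∀ x, ∑ i, ∑ j, fderiv ℝ (fderiv ℝ H) (∇ u x) (e i) (e j) *
      fderiv ℝ (fderiv ℝ u) x (e i) (e j) = 0) (v : E) :
    IsWeakSolution (fun x ↦ fderiv ℝ (fderiv ℝ H) (∇ u x)) fun x ↦ fderiv ℝ u x v := by
  have hu₂ : ContDiff ℝ 2 u := hu.of_le (by norm_num)
  have hgrad : ContDiff ℝ 2 (∇ u) := contDiff_gradient (by norm_num [hu])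
  have hflux : ContDiff ℝ 2 fun x ↦ fderiv ℝ H (∇ u x) :=
    (hH.fderiv_right (by norm_num)).comp hgrad
  have hdflux (x w : E) : fderiv ℝ (fun y ↦ fderiv ℝ H (∇ u y)) x w =
      fderiv ℝ (fderiv ℝ H) (∇ u x) (fderiv ℝ (∇ u) x w) :=
    DFunLike.congr_fun (fderiv_comp x (differentiable_fderiv (hH.of_le (by norm_num)) _)
      (hgrad.differentiable two_ne_zero x)) w
  have hdiv (x : E) : ∑ i, fderiv ℝ (fun y ↦ fderiv ℝ H (∇ u y)) x (e i) (e i) = 0 := by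
    simp only [hdflux]
    rw [sum_apply_fderiv_gradient e hu₂, heq x]
  refine ⟨(hu.fderiv_right (m := 1) (by norm_num)).clm_apply contDiff_const, fun φ hφ hφc ↦ ?_⟩
  simp only [gradient_fderiv_apply hu₂, ← hdflux]
  rw [integral_apply_gradient_eq_neg_integral_divergence_mul e
    ((hflux.fderiv_right (m := 1) (by norm_num)).clm_apply contDiff_const) hφ hφc]
  simp [divergence_fderiv_apply_eq_zero e hflux hdiv v]

theorem liouville_quasilinear_general (hH : ContDiff ℝ 3 H)
    (hpos : ∀ p v, v ≠ 0 → 0 < fderiv ℝ (fderiv ℝ H) p v v) (hu : ContDiff ℝ 3 u)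
    (hbdd : Bornology.IsBounded (range (∇ u)))
    (heq : ∀ x, ∑ i, ∑ j, fderiv ℝ (fderiv ℝ H) (∇ u x) (e i) (e j) *
      fderiv ℝ (fderiv ℝ u) x (e i) (e j) = 0) :
    ∃ (b : E) (c : ℝ), ∀ x, u x = inner ℝ b x + c := by
  refine exists_eq_inner_add_const_of_fderiv_const (hu.differentiable three_ne_zero) ?_
  rcases le_or_gt (Module.finrank ℝ E) 1 with hE | hE
  · exact fderiv_const_of_finrank_le_one e.toBasis hE (hu.of_le (by norm_num))
      (fun x ↦ hpos (∇ u x)) (by simpa using heq)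
  intro x y
  borelize E
  obtain ⟨l, L, hell⟩ := exists_isUniformlyElliptic_comp
    ((hH.fderiv_right (m := 2) (by norm_num)).continuous_fderiv two_ne_zero) hpos
    (continuous_gradient (hu.of_le (by norm_num))) hbdd
  ext v
  have hv : Bornology.IsBounded (range fun x ↦ fderiv ℝ u x v) := by
    simpa [← range_comp, Function.comp_def] using (innerSL ℝ v).lipschitz.isBounded_image hbdd
  exact (isWeakSolution_fderiv_apply e hH hu heq v).eq_of_isBounded_range hell hE hv x y

end Quasilinear

section Hessian

variable {n : ℕ} {f : EuclideanSpace ℝ (Fin n) → ℝ}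

lemma hessianMatrix_apply (hf : ContDiff ℝ 2 f) (x : EuclideanSpace ℝ (Fin n)) (i j : Fin n) :
    hessianMatrix f x i j = fderiv ℝ (fderiv ℝ f) x (EuclideanSpace.basisFun (Fin n) ℝ i)
      (EuclideanSpace.basisFun (Fin n) ℝ j) := by
  rw [EuclideanSpace.basisFun_apply, EuclideanSpace.basisFun_apply,
    ← fderiv_clm_apply_const (differentiable_fderiv hf x)]
  rfl

lemma fderiv_fderiv_apply_self_pos (hf : ContDiff ℝ 2 f) {x : EuclideanSpace ℝ (Fin n)}
    (hpos : (hessianMatrix f x).PosDef) {v : EuclideanSpace ℝ (Fin n)} (hv : v ≠ 0) :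
    0 < fderiv ℝ (fderiv ℝ f) x v v := by
  have hdot := hpos.dotProduct_mulVec_pos (x := v.ofLp) (by simpa using hv)
  have hcoord : fderiv ℝ (fderiv ℝ f) x v v =
      star v.ofLp ⬝ᵥ (hessianMatrix f x).mulVec v.ofLp := by
    conv_lhs => rw [← (EuclideanSpace.basisFun (Fin n) ℝ).sum_repr v]
    rw [Matrix.dotProduct_mulVec]
    simp [dotProduct, Matrix.vecMul, hessianMatrix_apply hf, Finset.mul_sum, mul_comm]
  rwa [hcoord]

end Hessian

/-- Liouville theorem for quasilinear equations: if `H` is smooth and uniformly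
convex in the sense `D²H > 0`, and `u` is an entire smooth solution of
`div(∇H(∇u)) = ∑ᵢⱼ Hᵢⱼ(∇u) uᵢⱼ = 0` with bounded gradient, then `u` is affine. -/
theorem liouville_quasilinear (n : ℕ)
    (H : EuclideanSpace ℝ (Fin n) → ℝ)
    (hH : ContDiff ℝ (⊤ : ℕ∞) H)
    (hHconv : ∀ p, (hessianMatrix H p).PosDef)
    (u : EuclideanSpace ℝ (Fin n) → ℝ)
    (hu : ContDiff ℝ (⊤ : ℕ∞) u)
    (hgrad : ∃ C : ℝ, ∀ x, ‖gradient u x‖ ≤ C)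
    (hEqn : ∀ x, ∑ i, ∑ j, hessianMatrix H (gradient u x) i j * hessianMatrix u x i j = 0) :
    ∃ (b : Fin n → ℝ) (c : ℝ), ∀ x, u x = (∑ i, b i * x i) + c := by
  have hH₂ : ContDiff ℝ 2 H := hH.of_le (WithTop.coe_le_coe.2 le_top)
  have hu₂ : ContDiff ℝ 2 u := hu.of_le (WithTop.coe_le_coe.2 le_top)
  simp only [hessianMatrix_apply hH₂, hessianMatrix_apply hu₂] at hEqn
  obtain ⟨b, c, hbc⟩ := liouville_quasilinear_general (EuclideanSpace.basisFun (Fin n) ℝ)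
    (hH.of_le (WithTop.coe_le_coe.2 le_top)) (fun p _ ↦ fderiv_fderiv_apply_self_pos hH₂ (hHconv p))
    (hu.of_le (WithTop.coe_le_coe.2 le_top))
    (isBounded_iff_forall_norm_le.2 (by simpa only [forall_mem_range] using hgrad)) hEqn
  exact ⟨b, c, by simpa [PiLp.inner_apply, mul_comm] using hbc⟩
end

section
/- (Nitsche-type constancy for the two-dimensional minimal surface system) Let m ≥ 1 and let u : ℝ² → ℝ^m be a smooth map solving the minimal surface system on all of ℝ². Then the matrix-valued map x ↦ √(det g(x)) · g(x)^{-1} is constant on ℝ², where g(x) = I₂ + (Du(x))ᵀ Du(x). -/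
open Real Matrix

/-- Jacobian matrix of a map `u : ℝⁿ → ℝᵐ` at `x`. -/
noncomputable def jacobianMatrix {n m : ℕ}
    (u : EuclideanSpace ℝ (Fin n) → EuclideanSpace ℝ (Fin m))
    (x : EuclideanSpace ℝ (Fin n)) : Matrix (Fin m) (Fin n) ℝ :=
  Matrix.of fun α i => fderiv ℝ (fun y => u y α) x (EuclideanSpace.single i 1)

/-- The induced metric `g = Iₙ + (Du)ᵀ Du` of the graph of `u`. -/
noncomputable def inducedMetric {n m : ℕ}
    (u : EuclideanSpace ℝ (Fin n) → EuclideanSpace ℝ (Fin m))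
    (x : EuclideanSpace ℝ (Fin n)) : Matrix (Fin n) (Fin n) ℝ :=
  (1 : Matrix (Fin n) (Fin n) ℝ) + (jacobianMatrix u x)ᵀ * jacobianMatrix u x

/-- `u` solves the minimal surface system: `∑ᵢⱼ gⁱʲ ∂ᵢ∂ⱼuᵅ = 0` for all `α`. -/
def SolvesMSS {n m : ℕ}
    (u : EuclideanSpace ℝ (Fin n) → EuclideanSpace ℝ (Fin m)) : Prop :=
  ∀ x, ∀ α : Fin m, ∑ i, ∑ j, (inducedMetric u x)⁻¹ i j *
    fderiv ℝ (fun y => fderiv ℝ (fun z => u z α) y (EuclideanSpace.single j 1)) x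
      (EuclideanSpace.single i 1) = 0

/-!
For a solution of the system in the plane, tracing the Christoffel symbols `⟨∂ᵢ∂ⱼu, ∂ₖu⟩` against
`g⁻¹` shows that the rows of the unimodular matrix `S = g / √(det g)` are closed, so `S` is the
differential of a map `f` of the plane. As `S` is positive, `f` is monotone, and `L = id + f` is
a global diffeomorphism. Identify the plane with `ℂ`. The identity
`conj (v - S v) = κ * (v + S v)`, which holds because `S` is symmetric of determinant one, says
that `conj ∘ (id - f) ∘ L⁻¹` is holomorphic with derivative `κ` (Lewy's transformation). Since
`‖κ‖ ≤ 1`, Liouville's theorem makes `κ` constant; `κ` determines `S`, and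
`S⁻¹ = √(det g) g⁻¹`.
-/

open scoped RealInnerProductSpace ComplexConjugate

section MonotoneMaps

variable {E : Type*} [NormedAddCommGroup E] [InnerProductSpace ℝ E]

lemma inner_sub_nonneg_of_hasFDerivAt {f : E → E} {f' : E → E →L[ℝ] E}
    (hf : ∀ x, HasFDerivAt f (f' x) x) (hpos : ∀ x v, 0 ≤ ⟪f' x v, v⟫) (x y : E) :
    0 ≤ ⟪f x - f y, x - y⟫ := by
  have hderiv (t : ℝ) : HasDerivAt (fun t => ⟪f (AffineMap.lineMap y x t), x - y⟫)
      ⟪f' (AffineMap.lineMap y x t) (x - y), x - y⟫ t := by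
    simpa using ((hf _).comp_hasDerivAt t AffineMap.hasDerivAt_lineMap).inner ℝ
      (hasDerivAt_const t (x - y))
  have hmono := monotone_of_hasDerivAt_nonneg hderiv fun t => hpos _ _
  simpa [inner_sub_left] using hmono zero_le_one

lemma antilipschitzWith_one_id_add {f : E → E} (hf : ∀ x y, 0 ≤ ⟪f x - f y, x - y⟫) :
    AntilipschitzWith 1 fun x => x + f x := by
  refine AntilipschitzWith.of_le_mul_dist fun x y => ?_
  rw [NNReal.coe_one, one_mul, dist_eq_norm, dist_eq_norm]
  rcases eq_or_ne x y with rfl | hxy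
  · simp
  refine le_of_mul_le_mul_right ?_ (norm_pos_iff.2 (sub_ne_zero.2 hxy))
  calc ‖x - y‖ * ‖x - y‖ ≤ ⟪x - y, x - y⟫ + ⟪f x - f y, x - y⟫ := by
        rw [← real_inner_self_eq_norm_mul_norm]
        exact le_add_of_nonneg_right (hf x y)
    _ = ⟪(x + f x) - (y + f y), x - y⟫ := by rw [← inner_add_left]; congr 1; abel
    _ ≤ ‖(x + f x) - (y + f y)‖ * ‖x - y‖ := real_inner_le_norm _ _

lemma isInvertible_id_add [FiniteDimensional ℝ E] {T : E →L[ℝ] E} (hT : ∀ v, 0 ≤ ⟪T v, v⟫) :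
    (ContinuousLinearMap.id ℝ E + T).IsInvertible := by
  have hinj : Function.Injective (ContinuousLinearMap.id ℝ E + T) :=
    (antilipschitzWith_one_id_add fun x y => by rw [← map_sub]; exact hT _).injective
  exact ⟨(LinearEquiv.ofInjectiveEndo (ContinuousLinearMap.id ℝ E + T : E →ₗ[ℝ] E)
    hinj).toContinuousLinearEquiv, rfl⟩

lemma surjective_of_antilipschitzWith_of_isOpenMap {X Y : Type*} [PseudoMetricSpace X]
    [ProperSpace X] [Nonempty X] [MetricSpace Y] [PreconnectedSpace Y] {K : NNReal} {f : X → Y}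
    (hf : AntilipschitzWith K f) (hcont : Continuous f) (hopen : IsOpenMap f) :
    Function.Surjective f := by
  have hproper : Filter.Tendsto f (Filter.cocompact X) (Filter.cocompact Y) := by
    rw [← Metric.cobounded_eq_cocompact]
    exact hf.tendsto_cobounded.mono_right Metric.cobounded_le_cocompact
  have hclosed : IsClosedMap f :=
    (isProperMap_iff_tendsto_cocompact.2 ⟨hcont, hproper⟩).isClosedMap
  rw [← Set.range_eq_univ]
  exact IsClopen.eq_univ ⟨hclosed.isClosed_range, hopen.isOpen_range⟩ (Set.range_nonempty f)

theorem exists_hasFDerivAt_leftInverse_id_add [FiniteDimensional ℝ E] {f : E → E}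
    {f' : E → E →L[ℝ] E} (hf : ∀ x, HasFDerivAt f (f' x) x) (hf' : Continuous f')
    (hpos : ∀ x v, 0 ≤ ⟪f' x v, v⟫) :
    ∃ g : E → E, (∀ x, g (x + f x) = x) ∧
      ∀ y, HasFDerivAt g (ContinuousLinearMap.id ℝ E + f' (g y)).inverse y := by
  choose e he using fun x => isInvertible_id_add (hpos x)
  have hstrict (x : E) : HasStrictFDerivAt (fun x => x + f x) (e x : E →L[ℝ] E) x := by
    rw [he]
    exact (hasStrictFDerivAt_id x).add
      (hasStrictFDerivAt_of_hasFDerivAt_of_continuousAt (.of_forall hf) hf'.continuousAt)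
  have hanti := antilipschitzWith_one_id_add (inner_sub_nonneg_of_hasFDerivAt hf hpos)
  have hcont : Continuous fun x => x + f x :=
    continuous_iff_continuousAt.2 fun x => (hstrict x).continuousAt
  choose g hg using surjective_of_antilipschitzWith_of_isOpenMap hanti hcont
    (isOpenMap_of_hasStrictFDerivAt_equiv hstrict)
  refine ⟨g, fun x => hanti.injective (hg _), fun y => ?_⟩
  rw [← he, ContinuousLinearMap.inverse_equiv]
  exact HasFDerivAt.of_local_left_inverse (hanti.to_rightInverse hg).continuous.continuousAt
    (hstrict (g y)).hasFDerivAt (.of_forall hg)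

end MonotoneMaps

/-- The self-adjoint positive definite real-linear map of determinant one on `ℂ = ℝ²` whose
traceless part is `v ↦ μ * conj v`; every such map arises from a unique `μ`. -/
noncomputable def unimodularCLM (μ : ℂ) : ℂ →L[ℝ] ℂ :=
  √(1 + ‖μ‖ ^ 2) • ContinuousLinearMap.id ℝ ℂ + μ • (Complex.conjCLE : ℂ →L[ℝ] ℂ)

lemma unimodularCLM_apply (μ v : ℂ) :
    unimodularCLM μ v = √(1 + ‖μ‖ ^ 2) * v + μ * conj v := by
  simp [unimodularCLM]

lemma sq_sqrt_one_add_norm_sq (μ : ℂ) : √(1 + ‖μ‖ ^ 2) ^ 2 = 1 + ‖μ‖ ^ 2 :=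
  Real.sq_sqrt (by positivity)

lemma continuous_unimodularCLM : Continuous unimodularCLM := by
  unfold unimodularCLM
  fun_prop

lemma inner_unimodularCLM_self_nonneg (μ v : ℂ) : 0 ≤ ⟪unimodularCLM μ v, v⟫ := by
  have hnorm : ‖μ‖ ≤ √(1 + ‖μ‖ ^ 2) := Real.le_sqrt_of_sq_le (by linarith)
  have hconj : -(‖μ‖ * ‖v‖ ^ 2) ≤ ⟪μ * conj v, v⟫ := by
    have := abs_real_inner_le_norm (μ * conj v) v
    rw [norm_mul, RCLike.norm_conj, mul_assoc, ← sq] at this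
    exact neg_le_of_abs_le this
  have hsmul : ⟪√(1 + ‖μ‖ ^ 2) * v, v⟫ = √(1 + ‖μ‖ ^ 2) * ‖v‖ ^ 2 := by
    rw [← Complex.real_smul, real_inner_smul_left, real_inner_self_eq_norm_sq]
  rw [unimodularCLM_apply, inner_add_left, hsmul]
  nlinarith [sq_nonneg ‖v‖]

/-- The complex number `κ` with `conj (v - T v) = κ * (v + T v)` for `T = unimodularCLM μ`. It is
the derivative of Lewy's holomorphic function attached to a map with differential `T`. -/
noncomputable def lewyCoefficient (μ : ℂ) : ℂ :=
  -conj μ / (1 + √(1 + ‖μ‖ ^ 2) : ℝ)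

lemma one_sub_norm_lewyCoefficient_sq (μ : ℂ) :
    1 - ‖lewyCoefficient μ‖ ^ 2 = 2 / (1 + √(1 + ‖μ‖ ^ 2)) := by
  have hpos : 0 < 1 + √(1 + ‖μ‖ ^ 2) := by positivity
  rw [lewyCoefficient, norm_div, norm_neg, RCLike.norm_conj, Complex.norm_of_nonneg hpos.le]
  field_simp
  linear_combination sq_sqrt_one_add_norm_sq μ

lemma norm_lewyCoefficient_le_one (μ : ℂ) : ‖lewyCoefficient μ‖ ≤ 1 := by
  have hpos : 0 ≤ 2 / (1 + √(1 + ‖μ‖ ^ 2)) := by positivity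
  rw [← one_sub_norm_lewyCoefficient_sq] at hpos
  exact (sq_le_one_iff₀ (norm_nonneg _)).1 (by linarith)

lemma lewyCoefficient_injective : Function.Injective lewyCoefficient := by
  intro μ ν h
  have hdenom : 1 + √(1 + ‖μ‖ ^ 2) = 1 + √(1 + ‖ν‖ ^ 2) := by
    have h2 := one_sub_norm_lewyCoefficient_sq μ
    rw [h, one_sub_norm_lewyCoefficient_sq] at h2
    field_simp at h2
    exact h2
  have hpos : 1 + √(1 + ‖ν‖ ^ 2) ≠ 0 := by positivity
  rw [lewyCoefficient, lewyCoefficient, hdenom,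
    div_left_inj' (Complex.ofReal_ne_zero.2 hpos), neg_inj] at h
  exact (starRingEnd ℂ).injective h

lemma conj_sub_unimodularCLM (μ v : ℂ) :
    conj (v - unimodularCLM μ v) = lewyCoefficient μ * (v + unimodularCLM μ v) := by
  have hpos : 1 + √(1 + ‖μ‖ ^ 2) ≠ 0 := by positivity
  have hpos' : (1 + √(1 + ‖μ‖ ^ 2) : ℂ) ≠ 0 := by exact_mod_cast hpos
  have hsq : (√(1 + ‖μ‖ ^ 2) : ℂ) ^ 2 = 1 + ‖μ‖ ^ 2 := by
    exact_mod_cast sq_sqrt_one_add_norm_sq μ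
  have hμ : conj μ * μ = (‖μ‖ : ℂ) ^ 2 := Complex.conj_mul' μ
  simp only [unimodularCLM_apply, lewyCoefficient, map_sub, map_add, map_mul, Complex.conj_conj,
    Complex.conj_ofReal, Complex.ofReal_add, Complex.ofReal_one]
  field_simp
  linear_combination conj v * (hμ - hsq)

lemma hasDerivAt_conj_sub_comp {f g : ℂ → ℂ} {μ y : ℂ}
    (hf : HasFDerivAt f (unimodularCLM μ) (g y))
    (hg : HasFDerivAt g (ContinuousLinearMap.id ℝ ℂ + unimodularCLM μ).inverse y) :
    HasDerivAt (fun y => conj (g y - f (g y))) (lewyCoefficient μ) y := by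
  have hreal := Complex.conjCLE.hasFDerivAt.comp y (((hasFDerivAt_id (g y)).sub hf).comp y hg)
  refine hasDerivAt_iff_hasFDerivAt.2 (hasFDerivAt_of_restrictScalars ℝ hreal ?_)
  ext1 w
  have hw := (isInvertible_id_add (inner_unimodularCLM_self_nonneg μ)).self_apply_inverse w
  change w * lewyCoefficient μ = _
  conv_lhs => rw [← hw, mul_comm]
  exact (conj_sub_unimodularCLM _ _).symm

theorem eq_of_hasFDerivAt_unimodularCLM {f μ : ℂ → ℂ} (hμ : Continuous μ)
    (hf : ∀ z, HasFDerivAt f (unimodularCLM (μ z)) z) (z w : ℂ) : μ z = μ w := by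
  obtain ⟨g, hleft, hg⟩ := exists_hasFDerivAt_leftInverse_id_add hf
    (continuous_unimodularCLM.comp hμ) fun z => inner_unimodularCLM_self_nonneg (μ z)
  have hderiv (y : ℂ) := hasDerivAt_conj_sub_comp (hf (g y)) (hg y)
  have hhol : Differentiable ℂ fun y => lewyCoefficient (μ (g y)) := by
    rw [← funext fun y => (hderiv y).deriv]
    exact Differentiable.deriv fun y => (hderiv y).differentiableAt
  have hbdd : Bornology.IsBounded (Set.range fun y => lewyCoefficient (μ (g y))) :=
    isBounded_iff_forall_norm_le.2
      ⟨1, Set.forall_mem_range.2 fun _ => norm_lewyCoefficient_le_one _⟩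
  have hconst := hhol.apply_eq_apply_of_bounded hbdd (z + f z) (w + f w)
  simp only [hleft] at hconst
  exact lewyCoefficient_injective hconst

section ClosedForms

variable {ι : Type*} [Fintype ι] [DecidableEq ι]

/-- The partial derivative `∂ᵢ f (x)`, in the form in which it occurs in `jacobianMatrix` and
`SolvesMSS`. -/
noncomputable abbrev partialDeriv (i : ι) (f : EuclideanSpace ℝ ι → ℝ)
    (x : EuclideanSpace ℝ ι) : ℝ :=
  fderiv ℝ f x (EuclideanSpace.single i 1)

/-- Closedness of the `1`-form `∑ⱼ aⱼ dxⱼ` on Euclidean space. Differentiability of the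
coefficients is a separate hypothesis wherever it matters. -/
def IsClosedForm (a : EuclideanSpace ℝ ι → ι → ℝ) : Prop :=
  ∀ x j k, partialDeriv j (fun y => a y k) x = partialDeriv k (fun y => a y j) x

lemma clm_apply_eq_sum (l : EuclideanSpace ℝ ι →L[ℝ] ℝ) (v : EuclideanSpace ℝ ι) :
    l v = ∑ i, v i * l (EuclideanSpace.single i 1) := by
  conv_lhs => rw [← (EuclideanSpace.basisFun ι ℝ).sum_repr v]
  simp

lemma IsClosedForm.exists_potential {a : EuclideanSpace ℝ ι → ι → ℝ} (ha : IsClosedForm a)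
    (hdiff : ∀ j, Differentiable ℝ fun x => a x j) :
    ∃ A : EuclideanSpace ℝ ι → ℝ, ∀ x,
      HasFDerivAt A (∑ j, a x j • (EuclideanSpace.proj j : EuclideanSpace ℝ ι →L[ℝ] ℝ)) x := by
  let ω (x : EuclideanSpace ℝ ι) : EuclideanSpace ℝ ι →L[ℝ] ℝ :=
    ∑ j, a x j • EuclideanSpace.proj j
  have hω (x : EuclideanSpace ℝ ι) : HasFDerivAt ω
      (∑ j, (fderiv ℝ (fun y => a y j) x).smulRight (EuclideanSpace.proj j)) x :=
    HasFDerivAt.fun_sum fun j _ =>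
      (hdiff j x).hasFDerivAt.smul_const (EuclideanSpace.proj (𝕜 := ℝ) j)
  have happly (x v w : EuclideanSpace ℝ ι) :
      fderiv ℝ ω x v w = ∑ j, ∑ k, v k * w j * partialDeriv k (fun y => a y j) x := by
    rw [(hω x).fderiv]
    simp only [_root_.sum_apply, _root_.smul_apply, ContinuousLinearMap.smulRight_apply,
      PiLp.proj_apply, smul_eq_mul]
    refine Finset.sum_congr rfl fun j _ => ?_
    rw [clm_apply_eq_sum, Finset.sum_mul]
    exact Finset.sum_congr rfl fun k _ => by ring
  have hsymm (x v w : EuclideanSpace ℝ ι) : fderiv ℝ ω x v w = fderiv ℝ ω x w v := by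
    rw [happly, happly, Finset.sum_comm]
    refine Finset.sum_congr rfl fun j _ => Finset.sum_congr rfl fun k _ => ?_
    rw [ha x j k, mul_comm (v j)]
  obtain ⟨A, hA⟩ := convex_univ.exists_forall_hasFDerivAt_of_fderiv_symmetric isOpen_univ
    (fun x _ => (hω x).differentiableAt.differentiableWithinAt) fun x _ => hsymm x
  exact ⟨A, fun x => hA x trivial⟩

end ClosedForms

section UnimodularMatrices

/-- The traceless part of a symmetric matrix `S`, encoded as the `μ : ℂ` for which it acts on
`ℝ² = ℂ` as `v ↦ μ * conj v`. -/
noncomputable def tracelessPart (S : Matrix (Fin 2) (Fin 2) ℝ) : ℂ :=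
  ⟨(S 0 0 - S 1 1) / 2, S 0 1⟩

variable {S T : Matrix (Fin 2) (Fin 2) ℝ}

lemma sqrt_one_add_norm_tracelessPart_sq (hS : S.PosDef) (hdet : S.det = 1) :
    √(1 + ‖tracelessPart S‖ ^ 2) = (S 0 0 + S 1 1) / 2 := by
  have htrace : 0 < S 0 0 + S 1 1 := add_pos hS.diag_pos hS.diag_pos
  have hsymm : S 1 0 = S 0 1 := hS.isHermitian.apply 0 1
  rw [Real.sqrt_eq_iff_eq_sq (by positivity) (by positivity), ← Complex.normSq_eq_norm_sq,
    Complex.normSq_apply, tracelessPart]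
  rw [Matrix.det_fin_two, hsymm] at hdet
  linear_combination -hdet

lemma unimodularCLM_tracelessPart_apply (hS : S.PosDef) (hdet : S.det = 1) (v : ℂ) :
    unimodularCLM (tracelessPart S) v =
      ⟨S 0 0 * v.re + S 0 1 * v.im, S 1 0 * v.re + S 1 1 * v.im⟩ := by
  have hsymm : S 1 0 = S 0 1 := hS.isHermitian.apply 0 1
  rw [unimodularCLM_apply, sqrt_one_add_norm_tracelessPart_sq hS hdet, hsymm]
  apply Complex.ext
  · simp only [tracelessPart, Complex.add_re, Complex.mul_re, Complex.ofReal_re,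
      Complex.ofReal_im, Complex.conj_re, Complex.conj_im]
    ring
  · simp only [tracelessPart, Complex.add_im, Complex.mul_im, Complex.ofReal_re,
      Complex.ofReal_im, Complex.conj_re, Complex.conj_im]
    ring

lemma eq_of_tracelessPart_eq (hS : S.PosDef) (hSdet : S.det = 1) (hT : T.PosDef)
    (hTdet : T.det = 1) (h : tracelessPart S = tracelessPart T) : S = T := by
  have hsum : (S 0 0 + S 1 1) / 2 = (T 0 0 + T 1 1) / 2 := by
    rw [← sqrt_one_add_norm_tracelessPart_sq hS hSdet, h,
      sqrt_one_add_norm_tracelessPart_sq hT hTdet]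
  have hdiff : (S 0 0 - S 1 1) / 2 = (T 0 0 - T 1 1) / 2 := congrArg Complex.re h
  have hoff : S 0 1 = T 0 1 := congrArg Complex.im h
  have hoff' : S 1 0 = T 1 0 :=
    (hS.isHermitian.apply 0 1).trans (hoff.trans (hT.isHermitian.apply 0 1).symm)
  ext i j
  fin_cases i <;> fin_cases j
  · change S 0 0 = T 0 0
    linarith
  · exact hoff
  · exact hoff'
  · change S 1 1 = T 1 1
    linarith

theorem eq_of_isClosedForm_of_det_eq_one
    {S : EuclideanSpace ℝ (Fin 2) → Matrix (Fin 2) (Fin 2) ℝ}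
    (hS : ∀ x, (S x).PosDef) (hdet : ∀ x, (S x).det = 1)
    (hdiff : ∀ i j, Differentiable ℝ fun x => S x i j)
    (hclosed : ∀ i, IsClosedForm fun x => S x i) (x y : EuclideanSpace ℝ (Fin 2)) : S x = S y := by
  choose A hA using fun i => (hclosed i).exists_potential (hdiff i)
  let φ : ℂ ≃L[ℝ] EuclideanSpace ℝ (Fin 2) :=
    Complex.orthonormalBasisOneI.repr.toContinuousLinearEquiv
  have hpotential (z : ℂ) : HasFDerivAt
      (fun z => Complex.equivRealProdCLM.symm (A 0 (φ z), A 1 (φ z)))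
      (unimodularCLM (tracelessPart (S (φ z)))) z := by
    have hderiv := Complex.equivRealProdCLM.symm.hasFDerivAt.comp z
      (((hA 0 (φ z)).comp z φ.hasFDerivAt).prodMk ((hA 1 (φ z)).comp z φ.hasFDerivAt))
    refine hderiv.congr_fderiv (ContinuousLinearMap.ext fun v => ?_)
    rw [unimodularCLM_tracelessPart_apply (hS _) (hdet _)]
    apply Complex.ext <;> simp [φ]
  have hcont : Continuous fun z => tracelessPart (S (φ z)) := by
    have hentry (i j : Fin 2) : Continuous fun z => S (φ z) i j :=
      (hdiff i j).continuous.comp φ.continuous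
    exact Complex.equivRealProdCLM.symm.continuous.comp
      ((((hentry 0 0).sub (hentry 1 1)).div_const 2).prodMk (hentry 0 1))
  have hconst := eq_of_hasFDerivAt_unimodularCLM hcont hpotential (φ.symm x) (φ.symm y)
  simp only [φ.apply_symm_apply] at hconst
  exact eq_of_tracelessPart_eq (hS x) (hdet x) (hS y) (hdet y) hconst

end UnimodularMatrices

section DetNormalization

/-- The rescaling of a `2 × 2` matrix of positive determinant to determinant one. -/
noncomputable def detNormalization (A : Matrix (Fin 2) (Fin 2) ℝ) : Matrix (Fin 2) (Fin 2) ℝ :=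
  (√A.det)⁻¹ • A

variable {A : Matrix (Fin 2) (Fin 2) ℝ}

lemma posDef_detNormalization (hA : A.PosDef) : (detNormalization A).PosDef :=
  hA.smul (inv_pos.2 (Real.sqrt_pos.2 hA.det_pos))

lemma det_detNormalization (hA : 0 < A.det) : (detNormalization A).det = 1 := by
  rw [detNormalization, Matrix.det_smul, Fintype.card_fin, inv_pow, Real.sq_sqrt hA.le,
    inv_mul_cancel₀ hA.ne']

lemma inv_detNormalization (hA : 0 < A.det) : (detNormalization A)⁻¹ = √A.det • A⁻¹ := by
  have hsqrt : (√A.det)⁻¹ ≠ 0 := inv_ne_zero (Real.sqrt_pos.2 hA).ne'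
  have h := Matrix.inv_smul' A (Units.mk0 _ hsqrt) hA.ne'.isUnit
  simpa [detNormalization, Units.smul_def] using h

lemma hasFDerivAt_inv_sqrt_mul {V : Type*} [NormedAddCommGroup V] [NormedSpace ℝ V] {N Q : V → ℝ}
    {N' Q' : V →L[ℝ] ℝ} {x : V} (hN : HasFDerivAt N N' x) (hQ : HasFDerivAt Q Q' x)
    (hpos : 0 < Q x) :
    HasFDerivAt (fun y => (√(Q y))⁻¹ * N y)
      ((√(Q x))⁻¹ • (N' - (N x / (2 * Q x)) • Q')) x := by
  have hsqrt : 0 < √(Q x) := Real.sqrt_pos.2 hpos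
  have hsq : √(Q x) ^ 2 = Q x := Real.sq_sqrt hpos.le
  have hinv := (hasDerivAt_inv hsqrt.ne').comp_hasFDerivAt x (hQ.sqrt hpos.ne')
  refine (hinv.mul hN).congr_fderiv ?_
  match_scalars
  · simp
  · rw [hsq]
    field_simp

lemma hasFDerivAt_detNormalization_apply {V : Type*} [NormedAddCommGroup V] [NormedSpace ℝ V]
    {B : V → Matrix (Fin 2) (Fin 2) ℝ} {B' d' : V →L[ℝ] ℝ} {x : V} {i j : Fin 2}
    (hB : HasFDerivAt (fun y => B y i j) B' x) (hdet : HasFDerivAt (fun y => (B y).det) d' x)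
    (hpos : 0 < (B x).det) :
    HasFDerivAt (fun y => detNormalization (B y) i j)
      ((√(B x).det)⁻¹ • (B' - (B x i j / (2 * (B x).det)) • d')) x :=
  hasFDerivAt_inv_sqrt_mul hB hdet hpos

end DetNormalization

section InducedMetric

variable {n m : ℕ} {u : EuclideanSpace ℝ (Fin n) → EuclideanSpace ℝ (Fin m)}

lemma posDef_inducedMetric (u : EuclideanSpace ℝ (Fin n) → EuclideanSpace ℝ (Fin m))
    (x : EuclideanSpace ℝ (Fin n)) : (inducedMetric u x).PosDef := by
  rw [inducedMetric, ← Matrix.conjTranspose_eq_transpose_of_trivial]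
  exact Matrix.PosDef.one.add_posSemidef (Matrix.posSemidef_conjTranspose_mul_self _)

lemma inducedMetric_apply (x : EuclideanSpace ℝ (Fin n)) (i j : Fin n) :
    inducedMetric u x i j = (1 : Matrix (Fin n) (Fin n) ℝ) i j +
      ∑ α, jacobianMatrix u x α i * jacobianMatrix u x α j := by
  simp [inducedMetric, Matrix.mul_apply]

lemma jacobianMatrix_apply (hu : Differentiable ℝ u) (x : EuclideanSpace ℝ (Fin n)) (α : Fin m)
    (i : Fin n) : jacobianMatrix u x α i = fderiv ℝ u x (EuclideanSpace.single i 1) α := by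
  have hcomp : HasFDerivAt (fun y => u y α)
      ((EuclideanSpace.proj α : _ →L[ℝ] ℝ) ∘L fderiv ℝ u x) x :=
    (EuclideanSpace.proj α : _ →L[ℝ] ℝ).hasFDerivAt.comp x (hu x).hasFDerivAt
  rw [jacobianMatrix, Matrix.of_apply, hcomp.fderiv]
  rfl

lemma hasFDerivAt_jacobianMatrix_apply (hu : Differentiable ℝ u)
    (hDu : Differentiable ℝ (fderiv ℝ u)) (x : EuclideanSpace ℝ (Fin n)) (α : Fin m) (i : Fin n) :
    HasFDerivAt (fun y => jacobianMatrix u y α i)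
      ((EuclideanSpace.proj α : _ →L[ℝ] ℝ) ∘L
        (fderiv ℝ (fderiv ℝ u) x).flip (EuclideanSpace.single i 1)) x := by
  simp only [jacobianMatrix_apply hu]
  have h := (EuclideanSpace.proj α : _ →L[ℝ] ℝ).hasFDerivAt.comp x
    ((hDu x).hasFDerivAt.clm_apply (hasFDerivAt_const (EuclideanSpace.single i (1 : ℝ)) x))
  exact h.congr_fderiv (by ext v; simp)

lemma differentiable_jacobianMatrix_apply (hu : Differentiable ℝ u)
    (hDu : Differentiable ℝ (fderiv ℝ u)) (α : Fin m) (i : Fin n) :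
    Differentiable ℝ fun x => jacobianMatrix u x α i :=
  fun x => (hasFDerivAt_jacobianMatrix_apply hu hDu x α i).differentiableAt

lemma isClosedForm_jacobianMatrix (hu : Differentiable ℝ u)
    (hDu : Differentiable ℝ (fderiv ℝ u)) (α : Fin m) :
    IsClosedForm fun x => jacobianMatrix u x α := by
  intro x i j
  rw [partialDeriv, partialDeriv, (hasFDerivAt_jacobianMatrix_apply hu hDu x α i).fderiv,
    (hasFDerivAt_jacobianMatrix_apply hu hDu x α j).fderiv]
  exact congrArg (fun v : EuclideanSpace ℝ (Fin m) => v α)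
    (second_derivative_symmetric (fun y => (hu y).hasFDerivAt) (hDu x).hasFDerivAt _ _)

lemma differentiable_inducedMetric_apply (hu : Differentiable ℝ u)
    (hDu : Differentiable ℝ (fderiv ℝ u)) (i j : Fin n) :
    Differentiable ℝ fun x => inducedMetric u x i j := by
  simp only [inducedMetric_apply]
  exact (Differentiable.fun_sum fun α _ => (differentiable_jacobianMatrix_apply hu hDu α i).mul
    (differentiable_jacobianMatrix_apply hu hDu α j)).const_add _

/-- The Christoffel symbol of the first kind `Γᵢⱼ,ₖ = ⟨∂ᵢ∂ⱼu, ∂ₖu⟩` of the induced metric. -/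
noncomputable def christoffel (u : EuclideanSpace ℝ (Fin n) → EuclideanSpace ℝ (Fin m))
    (x : EuclideanSpace ℝ (Fin n)) (i j k : Fin n) : ℝ :=
  ∑ α, partialDeriv i (fun y => jacobianMatrix u y α j) x * jacobianMatrix u x α k

lemma christoffel_comm (hu : Differentiable ℝ u) (hDu : Differentiable ℝ (fderiv ℝ u))
    (x : EuclideanSpace ℝ (Fin n)) (i j k : Fin n) :
    christoffel u x i j k = christoffel u x j i k :=
  Finset.sum_congr rfl fun α _ => by rw [isClosedForm_jacobianMatrix hu hDu α x i j]

lemma partialDeriv_inducedMetric (hu : Differentiable ℝ u) (hDu : Differentiable ℝ (fderiv ℝ u))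
    (x : EuclideanSpace ℝ (Fin n)) (i j k : Fin n) :
    partialDeriv i (fun y => inducedMetric u y j k) x =
      christoffel u x i j k + christoffel u x i k j := by
  have hJ := fun (α : Fin m) (l : Fin n) =>
    (differentiable_jacobianMatrix_apply hu hDu α l x).hasFDerivAt
  have hsum := (HasFDerivAt.fun_sum (u := Finset.univ) fun α _ =>
    (hJ α j).fun_mul (hJ α k)).const_add ((1 : Matrix (Fin n) (Fin n) ℝ) j k)
  simp only [inducedMetric_apply, partialDeriv]
  rw [hsum.fderiv, christoffel, christoffel, ← Finset.sum_add_distrib]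
  simp [mul_comm, add_comm]

lemma SolvesMSS.sum_inv_mul_christoffel (hMSS : SolvesMSS u) (x : EuclideanSpace ℝ (Fin n))
    (k : Fin n) : ∑ i, ∑ j, (inducedMetric u x)⁻¹ i j * christoffel u x i j k = 0 := by
  calc ∑ i, ∑ j, (inducedMetric u x)⁻¹ i j * christoffel u x i j k
      = ∑ α, (∑ i, ∑ j, (inducedMetric u x)⁻¹ i j *
          partialDeriv i (fun y => jacobianMatrix u y α j) x) * jacobianMatrix u x α k := by
        simp only [christoffel, Finset.mul_sum, Finset.sum_mul, ← mul_assoc]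
        rw [Finset.sum_comm (s := (Finset.univ : Finset (Fin m)))]
        exact Finset.sum_congr rfl fun i _ => Finset.sum_comm
    _ = 0 := Finset.sum_eq_zero fun α _ => by
        rw [show ∑ i, ∑ j, (inducedMetric u x)⁻¹ i j *
          partialDeriv i (fun y => jacobianMatrix u y α j) x = 0 from hMSS x α, zero_mul]

end InducedMetric

lemma isClosedForm_fin_two {a : EuclideanSpace ℝ (Fin 2) → Fin 2 → ℝ}
    (ha : ∀ x, partialDeriv 0 (fun y => a y 1) x = partialDeriv 1 (fun y => a y 0) x) :
    IsClosedForm a := by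
  intro x j k
  fin_cases j <;> fin_cases k
  exacts [rfl, ha x, (ha x).symm, rfl]

section PlanarGraph

variable {m : ℕ} {u : EuclideanSpace ℝ (Fin 2) → EuclideanSpace ℝ (Fin m)}

lemma inducedMetric_one_zero (x : EuclideanSpace ℝ (Fin 2)) :
    inducedMetric u x 1 0 = inducedMetric u x 0 1 :=
  (posDef_inducedMetric u x).isHermitian.apply 0 1

lemma SolvesMSS.adjugate_christoffel (hMSS : SolvesMSS u) (hu : Differentiable ℝ u)
    (hDu : Differentiable ℝ (fderiv ℝ u)) (x : EuclideanSpace ℝ (Fin 2)) (k : Fin 2) :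
    inducedMetric u x 1 1 * christoffel u x 0 0 k - 2 * inducedMetric u x 0 1 *
      christoffel u x 0 1 k + inducedMetric u x 0 0 * christoffel u x 1 1 k = 0 := by
  have htrace := hMSS.sum_inv_mul_christoffel x k
  have hdet := (posDef_inducedMetric u x).det_pos.ne'
  simp only [Matrix.inv_def, Ring.inverse_eq_inv', Matrix.adjugate_fin_two, Fin.sum_univ_two,
    Matrix.smul_apply, Matrix.of_apply, Matrix.cons_val_zero, Matrix.cons_val_one,
    Matrix.cons_val', Matrix.cons_val_fin_one, smul_eq_mul, christoffel_comm hu hDu x 1 0,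
    inducedMetric_one_zero] at htrace
  field_simp at htrace
  linear_combination htrace

lemma hasFDerivAt_det_inducedMetric (hu : Differentiable ℝ u) (hDu : Differentiable ℝ (fderiv ℝ u))
    (x : EuclideanSpace ℝ (Fin 2)) :
    HasFDerivAt (fun y => (inducedMetric u y).det)
      (inducedMetric u x 0 0 • fderiv ℝ (fun y => inducedMetric u y 1 1) x +
        inducedMetric u x 1 1 • fderiv ℝ (fun y => inducedMetric u y 0 0) x -
        (2 * inducedMetric u x 0 1) • fderiv ℝ (fun y => inducedMetric u y 0 1) x) x := by
  have hg (i j : Fin 2) := (differentiable_inducedMetric_apply hu hDu i j x).hasFDerivAt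
  simp only [Matrix.det_fin_two, inducedMetric_one_zero]
  exact (((hg 0 0).fun_mul (hg 1 1)).sub ((hg 0 1).fun_mul (hg 0 1))).congr_fderiv (by module)

lemma partialDeriv_det_inducedMetric (hu : Differentiable ℝ u) (hDu : Differentiable ℝ (fderiv ℝ u))
    (x : EuclideanSpace ℝ (Fin 2)) (k : Fin 2) :
    partialDeriv k (fun y => (inducedMetric u y).det) x =
      2 * (inducedMetric u x 0 0 * christoffel u x k 1 1 +
        inducedMetric u x 1 1 * christoffel u x k 0 0 -
        inducedMetric u x 0 1 * (christoffel u x k 0 1 + christoffel u x k 1 0)) := by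
  have hg := partialDeriv_inducedMetric hu hDu x k
  simp only [partialDeriv] at hg ⊢
  rw [(hasFDerivAt_det_inducedMetric hu hDu x).fderiv]
  simp only [_root_.sub_apply, _root_.add_apply, _root_.smul_apply, smul_eq_mul, hg]
  ring

lemma SolvesMSS.two_mul_det_mul_curl (hMSS : SolvesMSS u) (hu : Differentiable ℝ u)
    (hDu : Differentiable ℝ (fderiv ℝ u)) (x : EuclideanSpace ℝ (Fin 2)) (i : Fin 2) :
    2 * (inducedMetric u x).det * (partialDeriv 0 (fun y => inducedMetric u y i 1) x -
        partialDeriv 1 (fun y => inducedMetric u y i 0) x) =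
      inducedMetric u x i 1 * partialDeriv 0 (fun y => (inducedMetric u y).det) x -
        inducedMetric u x i 0 * partialDeriv 1 (fun y => (inducedMetric u y).det) x := by
  have h0 := hMSS.adjugate_christoffel hu hDu x 0
  have h1 := hMSS.adjugate_christoffel hu hDu x 1
  rw [partialDeriv_det_inducedMetric hu hDu, partialDeriv_det_inducedMetric hu hDu,
    partialDeriv_inducedMetric hu hDu, partialDeriv_inducedMetric hu hDu, Matrix.det_fin_two]
  fin_cases i
  · simp only [Fin.zero_eta, christoffel_comm hu hDu x 1 0, inducedMetric_one_zero]
    linear_combination (2 * inducedMetric u x 0 0) * h1 - (2 * inducedMetric u x 0 1) * h0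
  · simp only [Fin.mk_one, christoffel_comm hu hDu x 1 0, inducedMetric_one_zero]
    linear_combination (2 * inducedMetric u x 0 1) * h1 - (2 * inducedMetric u x 1 1) * h0

lemma hasFDerivAt_detNormalization_inducedMetric (hu : Differentiable ℝ u)
    (hDu : Differentiable ℝ (fderiv ℝ u)) (x : EuclideanSpace ℝ (Fin 2)) (i j : Fin 2) :
    HasFDerivAt (fun y => detNormalization (inducedMetric u y) i j)
      ((√(inducedMetric u x).det)⁻¹ • (fderiv ℝ (fun y => inducedMetric u y i j) x -
        (inducedMetric u x i j / (2 * (inducedMetric u x).det)) •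
          fderiv ℝ (fun y => (inducedMetric u y).det) x)) x :=
  hasFDerivAt_detNormalization_apply
    (differentiable_inducedMetric_apply hu hDu i j x).hasFDerivAt
    (hasFDerivAt_det_inducedMetric hu hDu x).differentiableAt.hasFDerivAt
    (posDef_inducedMetric u x).det_pos

lemma SolvesMSS.isClosedForm_detNormalization_inducedMetric (hMSS : SolvesMSS u)
    (hu : Differentiable ℝ u) (hDu : Differentiable ℝ (fderiv ℝ u)) (i : Fin 2) :
    IsClosedForm fun x => detNormalization (inducedMetric u x) i := by
  refine isClosedForm_fin_two fun x => ?_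
  have hcurl := hMSS.two_mul_det_mul_curl hu hDu x i
  have hdet := (posDef_inducedMetric u x).det_pos.ne'
  simp only [partialDeriv] at hcurl ⊢
  rw [(hasFDerivAt_detNormalization_inducedMetric hu hDu x i 1).fderiv,
    (hasFDerivAt_detNormalization_inducedMetric hu hDu x i 0).fderiv]
  simp only [_root_.sub_apply, _root_.smul_apply, smul_eq_mul]
  congr 1
  field_simp
  linear_combination hcurl

end PlanarGraph

theorem nitsche_constancy_mss_general {m : ℕ}
    {u : EuclideanSpace ℝ (Fin 2) → EuclideanSpace ℝ (Fin m)} (hu : Differentiable ℝ u)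
    (hDu : Differentiable ℝ (fderiv ℝ u)) (hMSS : SolvesMSS u) :
    ∃ M : Matrix (Fin 2) (Fin 2) ℝ,
      ∀ x, √(inducedMetric u x).det • (inducedMetric u x)⁻¹ = M := by
  have hpos := posDef_inducedMetric u
  have hconst := eq_of_isClosedForm_of_det_eq_one (fun x => posDef_detNormalization (hpos x))
    (fun x => det_detNormalization (hpos x).det_pos)
    (fun i j x => (hasFDerivAt_detNormalization_inducedMetric hu hDu x i j).differentiableAt)
    (hMSS.isClosedForm_detNormalization_inducedMetric hu hDu)
  refine ⟨(detNormalization (inducedMetric u 0))⁻¹, fun x => ?_⟩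
  rw [← inv_detNormalization (hpos x).det_pos, hconst x 0]

/-- Nitsche-type constancy for the two-dimensional minimal surface system:
`√(det g) g⁻¹` is constant for entire solutions in the plane. -/
theorem nitsche_constancy_mss (m : ℕ) (hm : 1 ≤ m)
    (u : EuclideanSpace ℝ (Fin 2) → EuclideanSpace ℝ (Fin m))
    (hu : ContDiff ℝ (⊤ : ℕ∞) u)
    (hMSS : SolvesMSS u) :
    ∃ M : Matrix (Fin 2) (Fin 2) ℝ,
      ∀ x, Real.sqrt (inducedMetric u x).det • (inducedMetric u x)⁻¹ = M :=
  nitsche_constancy_mss_general (hu.differentiable (by simp))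
    ((hu.fderiv_right (m := 1) (by norm_cast)).differentiable one_ne_zero) hMSS
end
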